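/- arXiv:2404.09175 — 4 statements merged into one kernel-verified Lean document; each statement's English description precedes it below -/
import Mathlib

section
/- (Γ, π) has property A if and only if both of the following hold: (i) π lies in K and every element of Γ lies in K (i.e., π and the elements of Γ are rational); and (ii) [K : 𝔽_q(π)] = [K_v : 𝔽_q((π))]. -/
/-!
Common setup: `Kv` is a complete field equipped with a (normalized, `ℤ`-valued)
valuation `Valued.v : Kv → ℤₘ₀ = WithZero (Multiplicative ℤ)`, and `K` is a dense
subfield of `Kv` (so that `Kv` is the completion `K_v` of `K`).  The valuation is
written multiplicatively: the additive valuation of `x` is `n` iff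
`Valued.v x = ofAdd (-n)`; the valuation ring `A_v` is `{x | Valued.v x ≤ 1}` and
`π A_v = {x | Valued.v x ≤ Valued.v π}`.
-/

open scoped Multiplicative

/-- The multiplicative value monoid `ℤₘ₀` for normalized `ℤ`-valued valuations. -/
abbrev ZM0 : Type := WithZero (Multiplicative ℤ)

/-- A sequence `b : ℕ → α` is `k`-automatic if its `k`-kernel
`{ (b (n k^i + j))_n : i ≥ 0, 0 ≤ j < k^i }` is finite. -/
def IsKAutomatic {α : Type*} (k : ℕ) (b : ℕ → α) : Prop :=
  {c : ℕ → α | ∃ i j : ℕ, j < k ^ i ∧ c = fun n => b (n * k ^ i + j)}.Finite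

/-- The sequence `{a n}_{n ≥ m}` is ultimately periodic: there are `N ≥ m` and
`L > 0` with `a (n + L) = a n` for all `n ≥ N`. -/
def UltimatelyPeriodic {α : Type*} (m : ℤ) (a : ℤ → α) : Prop :=
  ∃ N L : ℤ, m ≤ N ∧ 0 < L ∧ ∀ n : ℤ, N ≤ n → a (n + L) = a n

variable {Kv : Type*} [Field Kv] [Valued Kv ZM0]

/-- `x = ∑_{n ≥ m} a_n π^n` is the expansion of `x` with respect to `(Γ, π)`:
all digits `a n` for `n ≥ m` lie in `Γ` and the series converges to `x`. -/
def IsExpansion (π : Kv) (Γ : Set Kv) (m : ℤ) (a : ℤ → Kv) (x : Kv) : Prop :=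
  (∀ n : ℤ, m ≤ n → a n ∈ Γ) ∧
    HasSum (fun n : ℕ => a (m + n) * π ^ (m + (n : ℤ))) x

/-- `Γ ⊆ A_v` is a complete set of representatives of `A_v / π A_v`: reduction
modulo `π A_v` maps `Γ` bijectively onto `A_v / π A_v`. -/
def IsCompleteSetOfReps (π : Kv) (Γ : Set Kv) : Prop :=
  (∀ γ ∈ Γ, Valued.v γ ≤ 1) ∧
    ∀ x : Kv, Valued.v x ≤ 1 → ∃! γ, γ ∈ Γ ∧ Valued.v (x - γ) ≤ Valued.v π

/-- `(Γ, π)` has property A: for every `x ∈ K_v`, `x` is rational (i.e. `x ∈ K`)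
iff the digit sequence of the expansion of `x` w.r.t. `(Γ, π)` is ultimately
periodic. -/
def HasPropertyA (K : Subfield Kv) (π : Kv) (Γ : Set Kv) : Prop :=
  ∀ (x : Kv) (m : ℤ) (a : ℤ → Kv), IsExpansion π Γ m a x →
    (x ∈ K ↔ UltimatelyPeriodic m a)

/-- `(Γ, π)` has property B: for every `x ∈ K_v`, `x` is algebraic over `K` iff
the digit sequence of the expansion of `x` w.r.t. `(Γ, π)` is `p`-automatic. -/
def HasPropertyB (p : ℕ) (K : Subfield Kv) (π : Kv) (Γ : Set Kv) : Prop :=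
  ∀ (x : Kv) (m : ℤ) (a : ℤ → Kv), IsExpansion π Γ m a x →
    (IsAlgebraic ↥K x ↔ IsKAutomatic p fun n : ℕ => a (m + n))

/-- The degree `[S : F]` of a subset `S ⊆ Kv` over a subfield `F ⊆ Kv` (intended
for `F ⊆ S` with `S` a field): the rank of the `F`-span of `S` in `Kv`. -/
noncomputable def degOver (F : Subfield Kv) (S : Set Kv) : Cardinal :=
  Module.rank ↥F ↥(Submodule.span ↥F S)

/-- `Kv` is the completion of a global function field `K` of characteristic `p`
with respect to a normalized nontrivial valuation:  `Kv` has characteristic `p`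
and is complete, `K` is dense in `Kv`, the valuation takes every value `ofAdd n`
(`n ∈ ℤ`) on `K` (normalization/nontriviality), and `K` contains an element `x₀`
transcendental over the prime field `𝔽_p = ⊥` with `[K : 𝔽_p(x₀)] < ∞`. -/
structure IsGlobalFunctionFieldCompletion (p : ℕ) (K : Subfield Kv) : Prop where
  charP : CharP Kv p
  complete : CompleteSpace Kv
  dense : Dense (K : Set Kv)
  normalized : ∀ n : ℤ, ∃ x ∈ K,
    Valued.v x = ((Multiplicative.ofAdd n : Multiplicative ℤ) : ZM0)
  globalFunctionField : ∃ x₀ ∈ K, Transcendental (⊥ : Subfield Kv) x₀ ∧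
    degOver (Subfield.closure {x₀}) (K : Set Kv) < Cardinal.aleph0

/-- The constant field `𝔽_q` of `K`: the algebraic closure of `𝔽_p` in `K`,
i.e. the elements of `K` fixed by some positive power of the Frobenius. -/
def ConstantField (p : ℕ) (K : Subfield Kv) : Set Kv :=
  {x : Kv | x ∈ K ∧ ∃ n : ℕ, 0 < n ∧ x ^ p ^ n = x}

/-- The subfield `𝔽_q(π)` of `Kv` generated by `π` over the constant field. -/
def FqPi (p : ℕ) (K : Subfield Kv) (π : Kv) : Subfield Kv :=
  Subfield.closure (ConstantField p K ∪ {π})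

/-- `𝔽_q((π))`: the completion of `𝔽_q(π)`, i.e. its closure in `Kv`. -/
noncomputable def FqPiCompletion (p : ℕ) (K : Subfield Kv) (π : Kv) : Subfield Kv :=
  (FqPi p K π).topologicalClosure



/-! ### Proof -/

set_option linter.unusedSectionVars false

namespace PropA

theorem mem_nhds_iff' {s : Set Kv} {x : Kv} : s ∈ nhds x ↔
    ∃ z : Kv, z ≠ 0 ∧ ∀ y, Valued.v (y - x) < Valued.v z → y ∈ s := by
  rw [Valued.mem_nhds]
  constructor
  · rintro ⟨γ, hγ⟩
    obtain ⟨z, hz⟩ := MonoidWithZeroHom.ValueGroup₀.restrict₀_surjective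
      (f := MonoidWithZeroHom.ofClass (Valued.v : Valuation Kv ZM0)) γ.1
    have hz' : (Valued.v : Valuation Kv ZM0).restrict z = γ.1 := hz
    refine ⟨z, ?_, fun y hy => hγ ?_⟩
    · rintro rfl
      exact γ.ne_zero (by rw [← hz', map_zero])
    · show Valuation.restrict _ _ < γ.1
      rw [← hz']
      exact Valuation.restrict_lt_iff _ |>.mpr hy
  · rintro ⟨z, hz, h⟩
    have h' : (Valued.v : Valuation Kv ZM0).restrict z ≠ 0 := by simp [hz]
    refine ⟨Units.mk0 _ h', fun y hy => h y ?_⟩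
    rw [Units.val_mk0] at hy
    exact (Valuation.restrict_lt_iff _).mp hy

theorem exists_pow_lt {a b : ZM0} (ha : a < 1) (hb : b ≠ 0) : ∃ n : ℕ, a ^ n < b := by
  obtain ⟨n, hn⟩ := exists_pow_lt₀ ha (Units.mk0 b hb)
  exact ⟨n, hn⟩

theorem pow_le_pow_anti {a : ZM0} (ha : a < 1) {m n : ℕ} (h : m ≤ n) : a ^ n ≤ a ^ m :=
  pow_le_pow_right_of_le_one' ha.le h

theorem tendsto_zero {π : Kv} (hπ : Valued.v π < 1) {b : ℕ → Kv}
    (hb : ∀ n, Valued.v (b n) ≤ 1) :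
    Filter.Tendsto (fun n => b n * π ^ n) Filter.atTop (nhds 0) := by
  intro s hs
  obtain ⟨z, hz, h⟩ := mem_nhds_iff'.1 hs
  obtain ⟨N, hN⟩ := exists_pow_lt hπ ((Valuation.ne_zero_iff Valued.v).2 hz)
  refine Filter.mem_atTop_sets.2 ⟨N, fun n hn => h _ ?_⟩
  rw [sub_zero, map_mul, map_pow]
  calc _ ≤ 1 * Valued.v π ^ n := mul_le_mul_left (hb n) _
    _ ≤ Valued.v π ^ N := by rw [one_mul]; exact pow_le_pow_anti hπ hn
    _ < _ := hN

theorem nonarch : NonarchimedeanRing Kv where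
  is_nonarchimedean := by
    intro U hU
    obtain ⟨z, hz, h⟩ := mem_nhds_iff'.1 hU
    refine ⟨⟨(Valued.v : Valuation Kv ZM0).ltAddSubgroup
      (Units.mk0 _ ((Valuation.ne_zero_iff Valued.v).2 hz)), ?_⟩, ?_⟩
    · apply AddSubgroup.isOpen_of_mem_nhds _ (g := 0)
      exact mem_nhds_iff'.2 ⟨z, hz, fun y hy => by rw [sub_zero] at hy; exact hy⟩
    · intro y hy
      exact h y (by rw [sub_zero]; exact hy)

theorem summable_digits [CompleteSpace Kv] {π : Kv} (hπ : Valued.v π < 1) {b : ℕ → Kv}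
    (hb : ∀ n, Valued.v (b n) ≤ 1) : Summable (fun n => b n * π ^ n) := by
  have : NonarchimedeanRing Kv := nonarch
  apply NonarchimedeanAddGroup.summable_of_tendsto_cofinite_zero
  rw [Nat.cofinite_eq_atTop]
  exact tendsto_zero hπ hb

theorem closed_ball : IsClosed {x : Kv | Valued.v x ≤ 1} := Valued.isClosed_integer Kv

theorem sum_le_one {π : Kv} (hπ : Valued.v π < 1) {b : ℕ → Kv}
    (hb : ∀ n, Valued.v (b n) ≤ 1) {x : Kv} (h : HasSum (fun n => b n * π ^ n) x) :
    Valued.v x ≤ 1 := by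
  refine closed_ball.mem_of_tendsto h (Filter.Eventually.of_forall fun s => ?_)
  refine Valuation.map_sum_le (Valued.v : Valuation Kv ZM0) fun i _ => ?_
  rw [map_mul, map_pow]
  exact mul_le_one' (hb i) (pow_le_one' hπ.le i)

/-- T2 -/
theorem hasSum_of_rec [CompleteSpace Kv] {π : Kv} (hπ : Valued.v π < 1) {b x : ℕ → Kv}
    (hb : ∀ n, Valued.v (b n) ≤ 1) (hx : ∀ n, Valued.v (x n) ≤ 1)
    (hrec : ∀ n, x n = b n + π * x (n + 1)) : HasSum (fun n => b n * π ^ n) (x 0) := by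
  have h1 := (summable_digits hπ hb).hasSum
  have h2 : ∀ n, ∑ i ∈ Finset.range n, b i * π ^ i = x 0 - x n * π ^ n := by
    intro n
    induction n with
    | zero => simp
    | succ n ih => rw [Finset.sum_range_succ, ih]; linear_combination (-π ^ n) * hrec n
  have h3 := h1.tendsto_sum_nat
  simp_rw [h2] at h3
  have h4 := (tendsto_const_nhds (x := x 0)).sub (tendsto_zero hπ hx)
  rw [sub_zero] at h4
  rwa [tendsto_nhds_unique h3 h4] at h1

/-- T1' -/
theorem rec_of_hasSum [CompleteSpace Kv] {π : Kv} (hπ : Valued.v π < 1) {b : ℕ → Kv} {x₀ : Kv}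
    (hb : ∀ n, Valued.v (b n) ≤ 1) (h : HasSum (fun n => b n * π ^ n) x₀) :
    ∃ x : ℕ → Kv, x 0 = x₀ ∧ (∀ n, Valued.v (x n) ≤ 1) ∧ (∀ n, x n = b n + π * x (n + 1)) ∧
      ∀ n, HasSum (fun k => b (n + k) * π ^ k) (x n) := by
  have hs : ∀ n, HasSum (fun k => b (n + k) * π ^ k) (∑' k, b (n + k) * π ^ k) := fun n =>
    (summable_digits hπ (b := fun k => b (n + k)) fun k => hb _).hasSum
  refine ⟨fun n => ∑' k, b (n + k) * π ^ k, ?_, fun n => ?_, fun n => ?_, hs⟩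
  · simp [h.tsum_eq]
  · exact sum_le_one hπ (fun k => hb _) (hs n)
  · dsimp only
    rw [(hs n).summable.tsum_eq_zero_add, ← tsum_mul_left]
    simp only [add_zero, pow_zero, mul_one]
    congr 1
    refine tsum_congr fun k => ?_
    rw [show n + (k + 1) = n + 1 + k by ring]; ring

/-- periodic sums -/
theorem exists_periodic_form [CompleteSpace Kv] {π : Kv} (hπ : Valued.v π < 1) {b : ℕ → Kv}
    {x₀ : Kv} (hb : ∀ n, Valued.v (b n) ≤ 1) (h : HasSum (fun n => b n * π ^ n) x₀)
    {N L : ℕ} (hL : 0 < L) (hper : ∀ n, N ≤ n → b (n + L) = b n) :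
    x₀ = ∑ i ∈ Finset.range N, b i * π ^ i +
      ∑ k ∈ Finset.range L, b (N + k) * (π ^ (N + k) * (1 - π ^ L)⁻¹) := by
  obtain ⟨x, h0, hx1, hrec, hs⟩ := rec_of_hasSum hπ hb h
  have h2 : ∀ m n, x m = ∑ i ∈ Finset.range n, b (m + i) * π ^ i + x (m + n) * π ^ n := by
    intro m n
    induction n with
    | zero => simp
    | succ n ih => rw [Finset.sum_range_succ, ih, ← add_assoc]; linear_combination (π ^ n) * hrec (m + n)
  have h3 : x (N + L) = x N := by
    have h4 := hs (N + L)
    refine HasSum.unique h4 ?_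
    convert hs N using 2 with k
    rw [show N + L + k = N + k + L by ring, hper _ (by omega)]
  have h5 := h2 N L
  rw [h3] at h5
  have hne : (1 - π ^ L) ≠ 0 := by
    intro h
    have : π ^ L = 1 := (sub_eq_zero.1 h).symm
    have := congrArg Valued.v this
    rw [map_pow, map_one] at this
    exact absurd this (pow_lt_one' hπ hL.ne').ne
  have h6 : x N = (∑ i ∈ Finset.range L, b (N + i) * π ^ i) * (1 - π ^ L)⁻¹ := by
    rw [eq_mul_inv_iff_mul_eq₀ hne]
    linear_combination h5
  rw [← h0, h2 0 N]
  simp only [zero_add]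
  rw [h6, Finset.sum_mul, Finset.sum_mul]
  congr 1
  refine Finset.sum_congr rfl fun i _ => ?_
  ring


open Polynomial in
theorem poly_form {π : Kv} {C : Subfield Kv} 
    (hC : ∀ c ∈ C, c ≠ 0 → Valued.v c = 1) (hπ : Valued.v π < 1) {P : C[X]} (hP : P ≠ 0) :
    ∃ (k : ℕ) (c u : Kv), c ∈ C ∧ c ≠ 0 ∧ aeval π P = π ^ k * u ∧ Valued.v (u - c) ≤ Valued.v π := by
  obtain ⟨Q, hQ, hdvd⟩ := Polynomial.exists_eq_pow_rootMultiplicity_mul_and_not_dvd P hP 0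
  rw [map_zero, sub_zero] at hQ hdvd
  refine ⟨rootMultiplicity 0 P, (Q.coeff 0 : C), aeval π Q, (Q.coeff 0).2, ?_, ?_, ?_⟩
  · intro h
    exact hdvd (X_dvd_iff.2 (by exact_mod_cast h))
  · conv_lhs => rw [hQ]
    simp
  · have h1 : aeval π Q - (Q.coeff 0 : C) = π * aeval π Q.divX := by
      have h2 := congrArg (aeval π) (Polynomial.divX_mul_X_add Q)
      rw [map_add, map_mul, aeval_X, aeval_C] at h2
      rw [← h2, show algebraMap C Kv (Q.coeff 0) = ((Q.coeff 0 : C) : Kv) from rfl]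
      ring
    rw [h1, map_mul]
    refine mul_le_of_le_one_right' ?_
    rw [aeval_eq_sum_range]
    refine Valuation.map_sum_le (Valued.v : Valuation Kv ZM0) fun i _ => ?_
    rw [Subfield.smul_def, smul_eq_mul, map_mul, map_pow]
    refine mul_le_one' ?_ (pow_le_one' hπ.le i)
    by_cases h : ((Q.divX.coeff i : C) : Kv) = 0
    · rw [h]; simp
    · exact (hC _ (Q.divX.coeff i).2 h).le

theorem v_unit {u c : Kv} (hc : Valued.v c = 1) (π : Kv) (hπ : Valued.v π < 1)
    (h : Valued.v (u - c) ≤ Valued.v π) : Valued.v u = 1 := by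
  rw [← hc]
  exact Valuation.map_eq_of_sub_lt _ (by rw [hc]; exact h.trans_lt hπ)

def FF (C : Subfield Kv) (π : Kv) : Subfield Kv := Subfield.closure ((C : Set Kv) ∪ {π})

theorem pi_mem (C : Subfield Kv) (π : Kv) : π ∈ FF C π := Subfield.subset_closure (by simp)

theorem C_le (C : Subfield Kv) (π : Kv) : C ≤ FF C π := fun _ h => 
  Subfield.subset_closure (Or.inl h)

theorem FF_le {C K : Subfield Kv} {π : Kv} (hCK : C ≤ K) (hπK : π ∈ K) : FF C π ≤ K := by
  rw [FF, Subfield.closure_le]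
  rintro x (hx | rfl)
  exacts [hCK hx, hπK]

open Polynomial in
theorem mem_FF {C : Subfield Kv} {π f : Kv} (h : f ∈ FF C π) :
    ∃ r s : C[X], f = aeval π r / aeval π s := by
  rw [← IntermediateField.mem_adjoin_simple_iff]
  have : FF C π ≤ (IntermediateField.adjoin C {π}).toSubfield := by
    rw [FF, Subfield.closure_le]
    rintro x (hx | rfl)
    · exact (IntermediateField.adjoin C {π}).algebraMap_mem ⟨x, hx⟩
    · exact IntermediateField.mem_adjoin_simple_self C _
  exact this h

theorem FF_form {π : Kv} {C : Subfield Kv} 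
    (hC : ∀ c ∈ C, c ≠ 0 → Valued.v c = 1) (hπ0 : π ≠ 0) (hπ : Valued.v π < 1) {f : Kv}
    (hf : f ∈ FF C π) (hf0 : f ≠ 0) :
    ∃ (k : ℤ) (c u : Kv), c ∈ C ∧ c ≠ 0 ∧ f = π ^ k * u ∧ Valued.v (u - c) ≤ Valued.v π := by
  obtain ⟨r, s, rfl⟩ := mem_FF hf
  have hr : r ≠ 0 := by rintro rfl; simp at hf0
  have hs : s ≠ 0 := by rintro rfl; simp at hf0
  obtain ⟨k₁, c₁, u₁, hc₁, hc₁0, h₁, h₁'⟩ := poly_form hC hπ hr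
  obtain ⟨k₂, c₂, u₂, hc₂, hc₂0, h₂, h₂'⟩ := poly_form hC hπ hs
  have v1 := hC _ hc₁ hc₁0
  have v2 := hC _ hc₂ hc₂0
  have w1 := v_unit v1 π hπ h₁'
  have w2 := v_unit v2 π hπ h₂'
  have hu2 : u₂ ≠ 0 := by rintro rfl; simp at w2
  refine ⟨k₁ - k₂, c₁ / c₂, u₁ / u₂, div_mem hc₁ hc₂, div_ne_zero hc₁0 hc₂0, ?_, ?_⟩
  · rw [h₁, h₂, zpow_sub₀ hπ0, zpow_natCast, zpow_natCast, mul_div_mul_comm]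
  · have : u₁ / u₂ - c₁ / c₂ = ((u₁ - c₁) * c₂ - (u₂ - c₂) * c₁) / (u₂ * c₂) := by
      field_simp
      ring
    rw [this, map_div₀, map_mul _ u₂, w2, v2, one_mul, div_one]
    refine Valuation.map_sub_le _ ?_ ?_ <;> rw [map_mul]
    · rwa [v2, mul_one]
    · rwa [v1, mul_one]

theorem closure_form {π : Kv} {C : Subfield Kv} 
    (hC : ∀ c ∈ C, c ≠ 0 → Valued.v c = 1) (hπ0 : π ≠ 0) (hπ : Valued.v π < 1) {f : Kv}
    (hf : f ∈ (FF C π).topologicalClosure) (hf0 : f ≠ 0) :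
    ∃ (k : ℤ) (c u : Kv), c ∈ C ∧ c ≠ 0 ∧ f = π ^ k * u ∧ Valued.v (u - c) ≤ Valued.v π := by
  have hf' : f ∈ closure (FF C π : Set Kv) := hf
  obtain ⟨g, hg1, hg2⟩ := mem_closure_iff_nhds.1 hf' {y | Valued.v (y - f) < Valued.v (f * π)}
    (mem_nhds_iff'.2 ⟨f * π, mul_ne_zero hf0 hπ0, fun y hy => hy⟩)
  have hg1' : Valued.v (g - f) < Valued.v (f * π) := hg1
  have hlt : Valued.v (f * π) < Valued.v f := by
    rw [map_mul]
    exact mul_lt_of_lt_one_right ((Valuation.pos_iff _).2 hf0) hπ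
  have hvg : Valued.v g = Valued.v f := Valuation.map_eq_of_sub_lt _ (hg1'.trans hlt)
  have hg0 : g ≠ 0 := by
    rintro rfl
    rw [map_zero] at hvg
    exact hf0 ((Valuation.zero_iff _).1 hvg.symm)
  obtain ⟨k, c, u, hc, hc0, rfl, hu⟩ := FF_form hC hπ0 hπ hg2 hg0
  have hk : π ^ k ≠ 0 := zpow_ne_zero _ hπ0
  refine ⟨k, c, u + (f - π ^ k * u) / π ^ k, hc, hc0, by field_simp; ring, ?_⟩
  rw [show u + (f - π ^ k * u) / π ^ k - c = (u - c) + (f - π ^ k * u) / π ^ k by ring]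
  refine Valuation.map_add_le _ hu ?_
  have hvu : Valued.v u = 1 := v_unit (hC c hc hc0) π hπ hu
  rw [map_mul, hvu, mul_one] at hvg
  rw [map_div₀, Valuation.map_sub_swap, hvg]
  rw [div_le_iff₀ ((Valuation.pos_iff _).2 hf0), mul_comm (Valued.v π), ← map_mul]
  exact hg1'.le

/-- the residue-basis property -/
structure ResB (C : Subfield Kv) (π : Kv) {ι : Type*} (e : ι → Kv) : Prop where
  le_one : ∀ i, Valued.v (e i) ≤ 1
  span : ∀ y, Valued.v y ≤ 1 → ∃ (s : Finset ι) (c : ι → Kv), (∀ i, c i ∈ C) ∧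
    Valued.v (y - ∑ i ∈ s, c i * e i) ≤ Valued.v π
  indep : ∀ (s : Finset ι) (c : ι → Kv), (∀ i, c i ∈ C) →
    Valued.v (∑ i ∈ s, c i * e i) ≤ Valued.v π → ∀ i ∈ s, c i = 0

/-- L1 -/
theorem coord_le_one {π : Kv} {C : Subfield Kv} 
    (hC : ∀ c ∈ C, c ≠ 0 → Valued.v c = 1) (hπ0 : π ≠ 0) (hπ : Valued.v π < 1)
    {ι : Type*} {e : ι → Kv} (he : ResB C π e) (s : Finset ι) (f : ι → Kv)
    (hf : ∀ i ∈ s, f i ∈ (FF C π).topologicalClosure)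
    (h : Valued.v (∑ i ∈ s, f i * e i) ≤ 1) : ∀ i ∈ s, Valued.v (f i) ≤ 1 := by
  classical
  by_contra! hcon
  obtain ⟨i₀, hi₀, hi₀'⟩ := hcon
  obtain ⟨j, hj, hjmax⟩ := s.exists_max_image (fun i => Valued.v (f i)) ⟨i₀, hi₀⟩
  have hj1 : 1 < Valued.v (f j) := hi₀'.trans_le (hjmax _ hi₀)
  have hfj0 : f j ≠ 0 := by rintro h0; rw [h0, map_zero] at hj1; exact absurd hj1 (by simp)
  obtain ⟨k, cj, u, hcj, hcj0, hfj, hu⟩ := closure_form hC hπ0 hπ (hf j hj) hfj0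
  have hvu : Valued.v u = 1 := v_unit (hC cj hcj hcj0) π hπ hu
  have hvj : Valued.v (f j) = Valued.v π ^ k := by rw [hfj, map_mul, hvu, mul_one, map_zpow₀]
  have hvπ : 0 < Valued.v π := (Valuation.pos_iff _).2 hπ0
  have hk : k < 0 := by
    by_contra! hk
    obtain ⟨n, rfl⟩ := Int.eq_ofNat_of_zero_le hk
    rw [hvj, zpow_natCast] at hj1
    exact absurd hj1 (not_lt.2 (pow_le_one' hπ.le n))
  -- each scaled coefficient is congruent to a constant
  have key : ∀ i, ∃ c ∈ C, i ∈ s → Valued.v (f i * π ^ (-k) - c) ≤ Valued.v π := by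
    intro i
    by_cases his : i ∈ s
    swap
    · exact ⟨0, zero_mem _, fun h => absurd h his⟩
    by_cases h0 : f i = 0
    · exact ⟨0, zero_mem _, fun _ => by simp [h0]⟩
    obtain ⟨l, c, w, hc, hc0, hfi, hw⟩ := closure_form hC hπ0 hπ (hf i his) h0
    have hvw : Valued.v w = 1 := v_unit (hC c hc hc0) π hπ hw
    have hvi : Valued.v (f i) = Valued.v π ^ l := by rw [hfi, map_mul, hvw, mul_one, map_zpow₀]
    have hkl : k ≤ l := by
      have := hjmax i his
      rw [hvi, hvj] at this
      exact (zpow_le_zpow_iff_right_of_lt_one₀ hvπ hπ).1 this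
    rcases hkl.eq_or_lt with rfl | hlt
    · refine ⟨c, hc, fun _ => ?_⟩
      rw [hfi, mul_right_comm, ← zpow_add₀ hπ0]
      simpa using hw
    · refine ⟨0, zero_mem _, fun _ => ?_⟩
      rw [sub_zero, map_mul, hvi, map_zpow₀, ← zpow_add₀ hvπ.ne']
      conv_rhs => rw [← zpow_one (Valued.v π)]
      exact (zpow_le_zpow_iff_right_of_lt_one₀ hvπ hπ).2 (by omega)
  choose c hcC hc using key
  have hsum : Valued.v (∑ i ∈ s, c i * e i) ≤ Valued.v π := by
    have : ∑ i ∈ s, c i * e i = (∑ i ∈ s, f i * e i) * π ^ (-k) -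
        ∑ i ∈ s, (f i * π ^ (-k) - c i) * e i := by
      rw [Finset.sum_mul, ← Finset.sum_sub_distrib]
      refine Finset.sum_congr rfl fun i _ => by ring
    rw [this]
    refine Valuation.map_sub_le _ ?_ ?_
    · rw [map_mul]
      refine (mul_le_of_le_one_left' h).trans ?_
      rw [map_zpow₀]
      conv_rhs => rw [← zpow_one (Valued.v π)]
      exact (zpow_le_zpow_iff_right_of_lt_one₀ hvπ hπ).2 (by omega)
    · refine Valuation.map_sum_le (Valued.v : Valuation Kv ZM0) fun i hi => ?_
      rw [map_mul]
      exact (mul_le_of_le_one_right' (he.le_one i)).trans (hc i hi)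
  have hz := he.indep s c hcC hsum j hj
  have := hc j hj
  rw [hz, sub_zero, map_mul, hvj, map_zpow₀, ← zpow_add₀ hvπ.ne', add_neg_cancel, zpow_zero] at this
  exact absurd this (not_le.2 hπ)

theorem indep_closure {π : Kv} {C : Subfield Kv} 
    (hC : ∀ c ∈ C, c ≠ 0 → Valued.v c = 1) (hπ0 : π ≠ 0) (hπ : Valued.v π < 1)
    {ι : Type*} {e : ι → Kv} (he : ResB C π e) (s : Finset ι) (f : ι → Kv)
    (hf : ∀ i ∈ s, f i ∈ (FF C π).topologicalClosure)
    (h : ∑ i ∈ s, f i * e i = 0) : ∀ i ∈ s, f i = 0 := by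
  intro i hi
  by_contra hne
  obtain ⟨n, hn⟩ := exists_pow_lt hπ ((Valuation.ne_zero_iff (Valued.v : Valuation Kv ZM0)).2 hne)
  have hp : π ∈ (FF C π).topologicalClosure :=
    Subfield.le_topologicalClosure _ (pi_mem C π)
  have := coord_le_one hC hπ0 hπ he s (fun i => f i * (π ^ n)⁻¹)
    (fun i hi => mul_mem (hf i hi) (inv_mem (pow_mem hp n)))
    (by
      have : ∑ i ∈ s, f i * (π ^ n)⁻¹ * e i = (∑ i ∈ s, f i * e i) * (π ^ n)⁻¹ := by
        rw [Finset.sum_mul]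
        exact Finset.sum_congr rfl fun i _ => by ring
      rw [this, h]; simp) i hi
  rw [map_mul, map_inv₀, map_pow, ← div_eq_mul_inv,
    div_le_one₀ (pow_pos ((Valuation.pos_iff _).2 hπ0) n)] at this
  exact absurd hn (not_lt.2 this)


theorem dense_approx {K : Subfield Kv} (hd : Dense (K : Set Kv)) {z : Kv} (hz : z ≠ 0) (y : Kv) :
    ∃ x ∈ K, Valued.v (y - x) < Valued.v z := by
  obtain ⟨x, hx, hxK⟩ := mem_closure_iff_nhds.1 (hd y) {x | Valued.v (x - y) < Valued.v z}
    (mem_nhds_iff'.2 ⟨z, hz, fun y hy => hy⟩)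
  exact ⟨x, hxK, by rw [Valuation.map_sub_swap]; exact hx⟩

theorem ResB.span' {C : Subfield Kv} {π : Kv} {ι : Type*} [Fintype ι] {e : ι → Kv}
    (he : ResB C π e) (hπ0 : π ≠ 0) (y : Kv) (hy : Valued.v y ≤ 1) :
    ∃ (c : ι → Kv) (y' : Kv), (∀ i, c i ∈ C) ∧ Valued.v y' ≤ 1 ∧
      y = ∑ i, c i * e i + π * y' := by
  classical
  obtain ⟨s, c, hc, h⟩ := he.span y hy
  refine ⟨fun i => if i ∈ s then c i else 0, (y - ∑ i ∈ s, c i * e i) / π, fun i => ?_, ?_, ?_⟩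
  · dsimp only
    split_ifs
    exacts [hc i, zero_mem _]
  · rw [map_div₀]
    exact (div_le_one₀ ((Valuation.pos_iff _).2 hπ0)).2 h
  · rw [mul_div_cancel₀ _ hπ0]
    simp [ite_mul, Finset.sum_ite_mem]

theorem exists_pow_mul_le {π : Kv} (hπ : Valued.v π < 1) (x : Kv) :
    ∃ n : ℕ, Valued.v (π ^ n * x) ≤ 1 := by
  by_cases hx : x = 0
  · exact ⟨0, by simp [hx]⟩
  have h0 : 0 < Valued.v x := (Valuation.pos_iff _).2 hx
  obtain ⟨n, hn⟩ := exists_pow_lt hπ (inv_ne_zero h0.ne')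
  refine ⟨n, ?_⟩
  rw [map_mul, map_pow]
  calc _ ≤ (Valued.v x)⁻¹ * Valued.v x := mul_le_mul_left hn.le _
    _ = 1 := inv_mul_cancel₀ h0.ne'

theorem C_le_one {C : Subfield Kv} (hC : ∀ c ∈ C, c ≠ 0 → Valued.v c = 1) {c : Kv} (hc : c ∈ C) :
    Valued.v c ≤ 1 := by
  by_cases h : c = 0
  · simp [h]
  · exact (hC c hc h).le

/-- L2 -/
theorem span_closure [CompleteSpace Kv] {π : Kv} {C : Subfield Kv} 
    (hC : ∀ c ∈ C, c ≠ 0 → Valued.v c = 1) (hπ0 : π ≠ 0) (hπ : Valued.v π < 1)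
    {ι : Type*} [Fintype ι] {e : ι → Kv} (he : ResB C π e) (x : Kv) :
    ∃ z : ι → Kv, (∀ i, z i ∈ (FF C π).topologicalClosure) ∧ x = ∑ i, z i * e i := by
  have hp : π ∈ (FF C π).topologicalClosure :=
    Subfield.le_topologicalClosure _ (pi_mem C π)
  suffices H : ∀ x : Kv, Valued.v x ≤ 1 → 
      ∃ z : ι → Kv, (∀ i, z i ∈ (FF C π).topologicalClosure) ∧ x = ∑ i, z i * e i by
    obtain ⟨n, hn⟩ := exists_pow_mul_le hπ x
    obtain ⟨z, hz, h⟩ := H _ hn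
    refine ⟨fun i => (π ^ n)⁻¹ * z i, fun i => mul_mem (inv_mem (pow_mem hp n)) (hz i), ?_⟩
    simp_rw [mul_assoc]
    rw [← Finset.mul_sum, ← h, inv_mul_cancel_left₀ (pow_ne_zero n hπ0)]
  intro x hx
  have key : ∀ y : {y : Kv // Valued.v y ≤ 1}, ∃ (c : ι → Kv) (y' : {y : Kv // Valued.v y ≤ 1}),
      (∀ i, c i ∈ C) ∧ (y : Kv) = ∑ i, c i * e i + π * y' := by
    rintro ⟨y, hy⟩
    obtain ⟨c, y', hc, hy', h⟩ := he.span' hπ0 y hy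
    exact ⟨c, ⟨y', hy'⟩, hc, h⟩
  choose c nx hcC hrec using key
  let y : ℕ → {y : Kv // Valued.v y ≤ 1} := fun n => nx^[n] ⟨x, hx⟩
  have hy : ∀ n, y (n + 1) = nx (y n) := fun n => Function.iterate_succ_apply' nx n _
  have h1 : HasSum (fun n => (∑ i, c (y n) i * e i) * π ^ n) x := by
    refine hasSum_of_rec hπ (x := fun n => (y n : Kv)) (fun n => ?_) (fun n => (y n).2) fun n => ?_
    · refine Valuation.map_sum_le (Valued.v : Valuation Kv ZM0) fun i _ => ?_
      rw [map_mul]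
      exact mul_le_one' (C_le_one hC (hcC _ i)) (he.le_one i)
    · rw [hy]; exact hrec (y n)
  have h2 : ∀ i, HasSum (fun n => c (y n) i * π ^ n) (∑' n, c (y n) i * π ^ n) := fun i =>
    (summable_digits hπ fun n => C_le_one hC (hcC _ i)).hasSum
  refine ⟨fun i => ∑' n, c (y n) i * π ^ n, fun i => ?_, ?_⟩
  · refine (FF C π).isClosed_topologicalClosure.mem_of_tendsto (h2 i)
      (Filter.Eventually.of_forall fun s => ?_)
    refine Subfield.sum_mem _ fun n _ => mul_mem ?_ (pow_mem hp n)
    exact Subfield.le_topologicalClosure _ (C_le C π (hcC _ i))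
  · refine h1.unique ?_
    have h3 := hasSum_sum (s := Finset.univ) fun i _ => (h2 i).mul_right (e i)
    have h4 : (fun n => (∑ i, c (y n) i * e i) * π ^ n) =
        fun n => ∑ i, c (y n) i * π ^ n * e i := by
      funext n
      rw [Finset.sum_mul]
      exact Finset.sum_congr rfl fun i _ => by ring
    rw [h4]
    exact h3

theorem exists_resB {π : Kv} {C K : Subfield Kv} (hd : Dense (K : Set Kv))
    (hC : ∀ c ∈ C, c ≠ 0 → Valued.v c = 1) (hπ0 : π ≠ 0) (hπ : Valued.v π < 1)
    (hfin : Module.Finite (FF C π) (Submodule.span (FF C π) (K : Set Kv))) :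
    ∃ (n : ℕ) (e : Fin n → Kv), (∀ i, e i ∈ K) ∧ ResB C π e := by
  classical
  let U : Submodule C Kv :=
    { carrier := {x | Valued.v x ≤ Valued.v π}
      zero_mem' := by simp
      add_mem' := fun {a b} ha hb => Valuation.map_add_le (Valued.v : Valuation Kv ZM0) (x := a) (y := b) ha hb
      smul_mem' := fun c x hx => by
        show Valued.v ((c : Kv) * x) ≤ _
        rw [map_mul]
        exact (mul_le_of_le_one_left' (C_le_one hC c.2)).trans hx }
  have hU : ∀ x, x ∈ U ↔ Valued.v x ≤ Valued.v π := fun x => Iff.rfl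
  let w : {x : Kv // x ∈ K ∧ Valued.v x ≤ 1} → Kv ⧸ U := fun x => U.mkQ x.1
  obtain ⟨κ, a, ha, hspan, hind⟩ := exists_linearIndependent' C w
  have he : ResB C π (fun i => (a i).1) := by
    refine ⟨fun i => (a i).2.2, fun y hy => ?_, fun s c hc h => ?_⟩
    · obtain ⟨x, hxK, hx⟩ := dense_approx hd hπ0 y
      have hx1 : Valued.v x ≤ 1 := by
        rw [show x = y - (y - x) by ring]
        exact Valuation.map_sub_le _ hy (hx.trans hπ).le
      have : U.mkQ x ∈ Submodule.span C (Set.range (w ∘ a)) := by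
        rw [hspan]
        exact Submodule.subset_span ⟨⟨x, hxK, hx1⟩, rfl⟩
      obtain ⟨c, hc⟩ := Finsupp.mem_span_range_iff_exists_finsupp.1 this
      refine ⟨c.support, fun i => (c i : C), fun i => (c i).2, ?_⟩
      have h3 : U.mkQ (x - ∑ i ∈ c.support, ((c i : C) : Kv) * (a i).1) = 0 := by
        rw [map_sub, ← hc, map_sum, Finsupp.sum, sub_eq_zero]
        refine Finset.sum_congr rfl fun i _ => ?_
        exact (U.mkQ.map_smul (c i) (a i).1).symm
      rw [Submodule.mkQ_apply, Submodule.Quotient.mk_eq_zero, hU] at h3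
      rw [← sub_add_sub_cancel y x]
      exact Valuation.map_add_le _ hx.le h3
    · have := linearIndependent_iff'.1 hind s (fun i => ⟨c i, hc i⟩) (by
        have h3 : U.mkQ (∑ i ∈ s, c i * (a i).1) = 0 := by
          rwa [Submodule.mkQ_apply, Submodule.Quotient.mk_eq_zero, hU]
        rw [← h3, map_sum]
        refine Finset.sum_congr rfl fun i _ => ?_
        exact (U.mkQ.map_smul (⟨c i, hc i⟩ : C) (a i).1).symm)
      intro i hi
      exact congrArg Subtype.val (this i hi)
  have hli : LinearIndependent (FF C π) (fun i : κ =>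
      (⟨(a i).1, Submodule.subset_span (a i).2.1⟩ : Submodule.span (FF C π) (K : Set Kv))) := by
    rw [linearIndependent_iff']
    intro s g hg i hi
    have hg' := congrArg Subtype.val hg
    rw [AddSubmonoidClass.coe_finsetSum] at hg'
    exact Subtype.ext (indep_closure hC hπ0 hπ he s (fun i => (g i : Kv))
      (fun i _ => Subfield.le_topologicalClosure _ (g i).2) hg' i hi)
  have hκ : Finite κ := hli.finite
  obtain ⟨n, ⟨φ⟩⟩ := Finite.exists_equiv_fin κ
  refine ⟨n, fun i => (a (φ.symm i)).1, fun i => (a _).2.1, fun i => he.le_one _, fun y hy => ?_,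
    fun s c hc h i hi => ?_⟩
  · obtain ⟨s, c, hc, h⟩ := he.span y hy
    refine ⟨s.map φ.toEmbedding, fun i => c (φ.symm i), fun i => hc _, ?_⟩
    simpa [Finset.sum_map] using h
  · have := he.indep (s.map φ.symm.toEmbedding) (fun i => c (φ i)) (fun i => hc _)
      (by simpa [Finset.sum_map] using h) (φ.symm i) (by simpa using hi)
    simpa using this


theorem transc {π : Kv} {C : Subfield Kv} (hC : ∀ c ∈ C, c ≠ 0 → Valued.v c = 1) (hπ0 : π ≠ 0)
    (hπ : Valued.v π < 1) : Transcendental C π := by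
  rw [transcendental_iff]
  intro P hP
  by_contra h0
  obtain ⟨k, c, u, hc, hc0, h, hu⟩ := poly_form hC hπ h0
  have hvu := v_unit (hC c hc hc0) π hπ hu
  rw [hP] at h
  have hu0 : u ≠ 0 := by rintro rfl; simp at hvu
  exact mul_ne_zero (pow_ne_zero k hπ0) hu0 h.symm

theorem isAlg_mono {A B : Subfield Kv} (h : A ≤ B) {x : Kv} (hx : IsAlgebraic A x) :
    IsAlgebraic B x := by
  let : Algebra A B := (Subfield.inclusion h).toAlgebra
  have : IsScalarTower A B Kv := IsScalarTower.of_algebraMap_eq fun _ => rfl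
  exact hx.tower_top B

theorem isAlg_sub {R : Type*} [CommRing R] [Algebra R Kv] {S : Subalgebra R Kv} {B : Subfield Kv}
    (h : ∀ s ∈ S, s ∈ B) {x : Kv} (hx : IsAlgebraic S x) : IsAlgebraic B x := by
  let φ : S →+* B := (algebraMap S Kv).codRestrict B fun s => h s.1 s.2
  let : Algebra S B := φ.toAlgebra
  have : IsScalarTower S B Kv := IsScalarTower.of_algebraMap_eq fun _ => rfl
  refine hx.extendScalars (S := B) ?_
  intro a b hab
  exact Subtype.ext (congrArg (Subtype.val : B → Kv) hab)

theorem bot_v (p : ℕ) [Fact p.Prime] [CharP Kv p] : 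
    ∀ c ∈ (⊥ : Subfield Kv), c ≠ 0 → Valued.v c = 1 := by
  intro c hc hc0
  have h1 : c ^ p = c := (Subfield.mem_bot_iff_pow_eq_self Kv p).1 hc
  have h2 : c ^ (p - 1) = 1 := by
    have : c ^ (p - 1) * c = 1 * c := by
      rw [← pow_succ, Nat.sub_add_cancel (Fact.out : p.Prime).one_lt.le, h1, one_mul]
    exact mul_right_cancel₀ hc0 this
  have h3 := congrArg (Valued.v : Valuation Kv ZM0) h2
  rw [map_pow, map_one] at h3
  have h4 : p - 1 ≠ 0 := by have := (Fact.out : p.Prime).two_le; omega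
  exact (pow_eq_one_iff_left h4).1 h3

open IntermediateField.algebraAdjoinAdjoin in
theorem finite_K (p : ℕ) [Fact p.Prime] {K : Subfield Kv} (hK : IsGlobalFunctionFieldCompletion p K)
    {π : Kv} (hπ0 : π ≠ 0) (hπ : Valued.v π < 1) (hπK : π ∈ K) (C : Subfield Kv) :
    Module.Finite (FF C π) (Submodule.span (FF C π) (K : Set Kv)) := by
  have := hK.charP
  obtain ⟨x₀, hx₀K, -, hrank⟩ := hK.globalFunctionField
  set E := Subfield.closure {x₀} with hE
  set M := Submodule.span E (K : Set Kv) with hM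
  have hEK : E ≤ K := by rw [hE, Subfield.closure_le]; simpa using hx₀K
  have hfin : Module.Finite E M := by
    rw [← Module.rank_lt_aleph0_iff]; exact hrank
  -- every element of K is algebraic over E
  have hMK : ∀ x, x ∈ M ↔ x ∈ K := by
    intro x
    refine ⟨fun hx => ?_, fun hx => Submodule.subset_span hx⟩
    refine Submodule.span_induction (fun x h => h) (zero_mem _) (fun _ _ _ _ h1 h2 => add_mem h1 h2)
      (fun a x _ h => ?_) hx
    exact mul_mem (hEK a.2) h
  have halgE : ∀ x ∈ K, IsAlgebraic E x := by
    intro x hx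
    let : Algebra E K := (Subfield.inclusion hEK).toAlgebra
    have : IsScalarTower E K Kv := IsScalarTower.of_algebraMap_eq fun _ => rfl
    let φ : M →ₗ[E] K := 
      { toFun := fun y => ⟨y.1, (hMK _).1 y.2⟩
        map_add' := fun _ _ => rfl
        map_smul' := fun _ _ => rfl }
    have : Module.Finite E K := Module.Finite.of_surjective φ 
      fun y => ⟨⟨y.1, (hMK _).2 y.2⟩, rfl⟩
    have h := Algebra.IsAlgebraic.isAlgebraic (R := E) (⟨x, hx⟩ : K)
    exact h.algebraMap (A := Kv)
  -- x₀ algebraic over FF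
  set F := FF C π with hF
  have hx₀ : IsAlgebraic F x₀ := by
    have hcl : ∀ (s : Set Kv) (y : Kv), y ∈ (AlgebraicIndependent.matroid (⊥ : Subfield Kv) Kv).closure s ↔
        IsAlgebraic (Algebra.adjoin (⊥ : Subfield Kv) s) y := by
      intro s y
      rw [AlgebraicIndependent.matroid_closure_eq]
      rfl
    have h1 : π ∉ (AlgebraicIndependent.matroid (⊥ : Subfield Kv) Kv).closure ∅ := by
      rw [hcl]
      intro h
      refine transc (bot_v p) hπ0 hπ (isAlg_sub (fun s hs => ?_) h)
      rw [Algebra.adjoin_empty, Algebra.mem_bot] at hs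
      obtain ⟨r, rfl⟩ := hs
      exact r.2
    have h2 : π ∈ (AlgebraicIndependent.matroid (⊥ : Subfield Kv) Kv).closure (insert x₀ ∅) := by
      rw [hcl]
      have hle : E ≤ (IntermediateField.adjoin (⊥ : Subfield Kv) (insert x₀ ∅)).toSubfield := by
        rw [hE, Subfield.closure_le]
        rintro y rfl
        exact IntermediateField.subset_adjoin _ _ (Set.mem_insert _ _)
      have h2 : IsAlgebraic (IntermediateField.adjoin (⊥ : Subfield Kv) (insert x₀ ∅)) π :=
        isAlg_mono hle (halgE π hπK)
      have : Algebra.IsAlgebraic (Algebra.adjoin (⊥ : Subfield Kv) (insert x₀ ∅))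
        (IntermediateField.adjoin (⊥ : Subfield Kv) (insert x₀ ∅)) :=
        IsLocalization.isAlgebraic _ (nonZeroDivisors _)
      exact h2.restrictScalars _
    have h3 := Matroid.mem_closure_insert h1 h2
    rw [hcl] at h3
    refine isAlg_sub (fun s hs => ?_) h3
    refine Algebra.adjoin_induction (fun y hy => ?_) (fun r => ?_) (fun _ _ _ _ h1 h2 => add_mem h1 h2)
      (fun _ _ _ _ h1 h2 => mul_mem h1 h2) hs
    · rcases hy with rfl | hy
      · exact pi_mem C _
      · exact absurd hy (Set.notMem_empty _)
    · exact (bot_le : (⊥ : Subfield Kv) ≤ F) r.2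
  have halgF : ∀ x ∈ K, IsAlgebraic F x := by
    intro x hx
    have h1 := halgE x hx
    have hle : E ≤ (IntermediateField.adjoin F {x₀}).toSubfield := by
      rw [hE, Subfield.closure_le]
      rintro y rfl
      exact IntermediateField.mem_adjoin_simple_self F _
    have h2 : IsAlgebraic (IntermediateField.adjoin F {x₀}) x := isAlg_mono hle h1
    have : Algebra.IsAlgebraic F (IntermediateField.adjoin F {x₀}) := 
      IntermediateField.isAlgebraic_adjoin_simple hx₀.isIntegral
    exact h2.restrictScalars F
  obtain ⟨S, hS⟩ := Module.Finite.fg_top (R := E) (M := M)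
  let T : Set Kv := insert x₀ (Subtype.val '' (S : Set M))
  have : Finite T := Set.Finite.insert _ ((S.finite_toSet).image _)
  have hT : ∀ x ∈ T, IsIntegral F x := by
    rintro x (rfl | ⟨y, -, rfl⟩)
    · exact hx₀.isIntegral
    · exact (halgF _ ((hMK _).1 y.2)).isIntegral
  have hfd := IntermediateField.finiteDimensional_adjoin hT
  have hle : Submodule.span F (K : Set Kv) ≤ 
      Subalgebra.toSubmodule (IntermediateField.adjoin F T).toSubalgebra := by
    rw [Submodule.span_le]
    intro x hx
    have hEL : E ≤ (IntermediateField.adjoin F T).toSubfield := by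
      rw [hE, Subfield.closure_le]
      rintro y rfl
      exact IntermediateField.subset_adjoin F T (Set.mem_insert _ _)
    have hxM : (⟨x, (hMK x).2 hx⟩ : M) ∈ Submodule.span E (S : Set M) := by rw [hS]; trivial
    show x ∈ IntermediateField.adjoin F T
    refine Submodule.span_induction (p := fun (y : M) _ => (y : Kv) ∈ IntermediateField.adjoin F T) 
      (fun y h => ?_) (zero_mem _) (fun _ _ _ _ h1 h2 => add_mem h1 h2) (fun a y _ h => ?_) hxM
    · exact IntermediateField.subset_adjoin F T (Or.inr ⟨y, h, rfl⟩)
    · exact mul_mem (hEL a.2) h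
  have : Module.Finite F (Subalgebra.toSubmodule (IntermediateField.adjoin F T).toSubalgebra) := hfd
  exact Submodule.finiteDimensional_of_le hle


theorem pow_iter {p n : ℕ} {x : Kv} (h : x ^ p ^ n = x) (m : ℕ) : x ^ p ^ (n * m) = x := by
  induction m with
  | zero => simp
  | succ m ih => rw [Nat.mul_succ, pow_add, pow_mul, ih, h]

/-- the constant field as a subfield -/
def CF (p : ℕ) [Fact p.Prime] [CharP Kv p] (K : Subfield Kv) : Subfield Kv where
  carrier := ConstantField p K
  mul_mem' := by
    rintro a b ⟨ha, n, hn, hna⟩ ⟨hb, m, hm, hmb⟩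
    refine ⟨mul_mem ha hb, n * m, Nat.mul_pos hn hm, ?_⟩
    rw [mul_pow, pow_iter hna, mul_comm n m, pow_iter hmb]
  one_mem' := ⟨one_mem _, 1, one_pos, one_pow _⟩
  add_mem' := by
    rintro a b ⟨ha, n, hn, hna⟩ ⟨hb, m, hm, hmb⟩
    refine ⟨add_mem ha hb, n * m, Nat.mul_pos hn hm, ?_⟩
    rw [add_pow_char_pow, pow_iter hna, mul_comm n m, pow_iter hmb]
  zero_mem' := ⟨zero_mem _, 1, one_pos, zero_pow (pow_ne_zero _ (Fact.out : p.Prime).ne_zero)⟩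
  neg_mem' := by
    rintro a ⟨ha, n, hn, hna⟩
    refine ⟨neg_mem ha, n, hn, ?_⟩
    have h := sub_pow_char_pow (p := p) (0 : Kv) a n
    rw [zero_sub, hna, zero_pow (pow_ne_zero _ (Fact.out : p.Prime).ne_zero), zero_sub] at h
    exact h
  inv_mem' := by
    rintro a ⟨ha, n, hn, hna⟩
    exact ⟨inv_mem ha, n, hn, by rw [inv_pow, hna]⟩

theorem CF_le (p : ℕ) [Fact p.Prime] [CharP Kv p] (K : Subfield Kv) : CF p K ≤ K :=
  fun _ h => h.1

theorem CF_v (p : ℕ) [Fact p.Prime] [CharP Kv p] (K : Subfield Kv) :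
    ∀ c ∈ CF p K, c ≠ 0 → Valued.v c = 1 := by
  rintro c ⟨-, n, hn, hc⟩ hc0
  have h1 : 1 < p ^ n := Nat.one_lt_pow hn.ne' (Fact.out : p.Prime).one_lt
  have h2 : c ^ (p ^ n - 1) = 1 := by
    have : c ^ (p ^ n - 1) * c = 1 * c := by
      rw [← pow_succ, Nat.sub_add_cancel h1.le, hc, one_mul]
    exact mul_right_cancel₀ hc0 this
  have h3 := congrArg (Valued.v : Valuation Kv ZM0) h2
  rw [map_pow, map_one] at h3
  exact (pow_eq_one_iff_left (by omega)).1 h3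

theorem finite_res (p : ℕ) [Fact p.Prime] {K : Subfield Kv}
    (hK : IsGlobalFunctionFieldCompletion p K)
    {π : Kv} (hπ0 : π ≠ 0) (hπ : Valued.v π < 1) (hπK : π ∈ K) (T : Set Kv)
    (hT1 : ∀ x ∈ T, Valued.v x ≤ 1)
    (hT : ∀ x ∈ T, ∀ y ∈ T, Valued.v (x - y) ≤ Valued.v π → x = y) : T.Finite := by
  have := hK.charP
  obtain ⟨n, e, -, he⟩ := exists_resB hK.dense (bot_v p) hπ0 hπ (finite_K p hK hπ0 hπ hπK ⊥)
  have hbot : Finite (⊥ : Subfield Kv) := by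
    have : Fintype (⊥ : Subfield Kv) := Subfield.fintypeBot Kv p
    infer_instance
  have key : ∀ x : T, ∃ c : Fin n → (⊥ : Subfield Kv), 
      Valued.v ((x : Kv) - ∑ i, (c i : Kv) * e i) ≤ Valued.v π := by
    intro x
    obtain ⟨c, y, hc, hy, h⟩ := he.span' hπ0 x (hT1 x x.2)
    refine ⟨fun i => ⟨c i, hc i⟩, ?_⟩
    have : (x : Kv) - ∑ i, c i * e i = π * y := by rw [h]; ring
    simp only [this, map_mul]
    exact mul_le_of_le_one_right' hy
  choose f hf using key
  have hinj : Function.Injective f := by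
    intro x y hxy
    refine Subtype.ext (hT x x.2 y y.2 ?_)
    have h1 := hf x
    have h2 := hf y
    rw [← hxy] at h2
    have : (x : Kv) - y = (x - ∑ i, (f x i : Kv) * e i) - (y - ∑ i, (f x i : Kv) * e i) := by ring
    rw [this]
    exact Valuation.map_sub_le _ h1 h2
  have : Finite T := Finite.of_injective f hinj
  exact T.toFinite

theorem finite_CF (p : ℕ) [Fact p.Prime] [CharP Kv p] {K : Subfield Kv}
    (hK : IsGlobalFunctionFieldCompletion p K)
    {π : Kv} (hπ0 : π ≠ 0) (hπ : Valued.v π < 1) (hπK : π ∈ K) : Finite (CF p K) := by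
  have : (CF p K : Set Kv).Finite := by
    refine finite_res p hK hπ0 hπ hπK _ (fun x hx => C_le_one (CF_v p K) hx) ?_
    intro x hx y hy h
    by_contra hne
    have h1 := CF_v p K (x - y) (sub_mem hx hy) (sub_ne_zero.2 hne)
    rw [h1] at h
    exact absurd (h.trans_lt hπ) (lt_irrefl _)
  exact this

theorem finite_Gamma (p : ℕ) [Fact p.Prime] {K : Subfield Kv}
    (hK : IsGlobalFunctionFieldCompletion p K)
    {π : Kv} (hπ0 : π ≠ 0) (hπ : Valued.v π < 1) (hπK : π ∈ K) {Γ : Set Kv}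
    (hΓ : IsCompleteSetOfReps π Γ) : Γ.Finite := by
  refine finite_res p hK hπ0 hπ hπK _ hΓ.1 ?_
  intro x hx y hy h
  exact (hΓ.2 x (hΓ.1 x hx)).unique ⟨hx, by simp⟩ ⟨hy, h⟩

theorem deg_iff [CompleteSpace Kv] {π : Kv} {C K : Subfield Kv}
    (hC : ∀ c ∈ C, c ≠ 0 → Valued.v c = 1) (hπ0 : π ≠ 0) (hπ : Valued.v π < 1)
    {n : ℕ} {e : Fin n → Kv} (heK : ∀ i, e i ∈ K) (he : ResB C π e)
    (hfin : Module.Finite (FF C π) (Submodule.span (FF C π) (K : Set Kv))) :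
    degOver (FF C π) (K : Set Kv) = Module.rank (FF C π).topologicalClosure Kv ↔
      ∀ x ∈ K, ∃ f : Fin n → Kv, (∀ i, f i ∈ FF C π) ∧ x = ∑ i, f i * e i := by
  have hli : LinearIndependent (FF C π).topologicalClosure e := by
    rw [Fintype.linearIndependent_iff]
    intro g hg i
    have := indep_closure hC hπ0 hπ he Finset.univ (fun i => (g i : Kv)) (fun i _ => (g i).2) hg i
      (Finset.mem_univ i)
    exact Subtype.ext this
  have hspan : ⊤ ≤ Submodule.span (FF C π).topologicalClosure (Set.range e) := by
    intro x _
    obtain ⟨z, hz, rfl⟩ := span_closure hC hπ0 hπ he x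
    refine Submodule.sum_mem _ fun i _ => ?_
    exact Submodule.smul_mem _ (⟨z i, hz i⟩ : (FF C π).topologicalClosure) 
      (Submodule.subset_span ⟨i, rfl⟩)
  have hr : Module.rank (FF C π).topologicalClosure Kv = n := by
    rw [rank_eq_card_basis (Module.Basis.mk hli hspan), Fintype.card_fin]
  have hli' : LinearIndependent (FF C π) e := by
    rw [Fintype.linearIndependent_iff]
    intro g hg i
    have := indep_closure hC hπ0 hπ he Finset.univ (fun i => (g i : Kv))
      (fun i _ => Subfield.le_topologicalClosure _ (g i).2) hg i (Finset.mem_univ i)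
    exact Subtype.ext this
  have hle : Submodule.span (FF C π) (Set.range e) ≤ Submodule.span (FF C π) (K : Set Kv) := by
    refine Submodule.span_mono ?_
    rintro _ ⟨i, rfl⟩
    exact heK i
  have hfr := finrank_span_eq_card hli'
  rw [Fintype.card_fin] at hfr
  have h1 : degOver (FF C π) (K : Set Kv) = Module.rank (FF C π).topologicalClosure Kv ↔
      Submodule.span (FF C π) (Set.range e) = Submodule.span (FF C π) (K : Set Kv) := by
    rw [hr, degOver, ← Module.finrank_eq_rank, Nat.cast_inj]
    constructor
    · intro h
      exact Submodule.eq_of_le_of_finrank_eq hle (hfr.trans h.symm)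
    · intro h
      rw [← h, hfr]
  rw [h1]
  constructor
  · intro h x hx
    have : x ∈ Submodule.span (FF C π) (Set.range e) := by
      rw [h]; exact Submodule.subset_span hx
    obtain ⟨c, hc⟩ := (Submodule.mem_span_range_iff_exists_fun _).1 this
    exact ⟨fun i => c i, fun i => (c i).2, hc.symm⟩
  · intro h
    refine le_antisymm hle (Submodule.span_le.2 ?_)
    intro x hx
    obtain ⟨f, hf, rfl⟩ := h x hx
    refine Submodule.sum_mem _ fun i _ => ?_
    exact Submodule.smul_mem _ (⟨f i, hf i⟩ : FF C π) (Submodule.subset_span ⟨i, rfl⟩)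


theorem v_one_sub {z : Kv} (hz : Valued.v z < 1) : Valued.v (1 - z) = 1 := by
  have := Valuation.map_sub_eq_of_lt_right (Valued.v : Valuation Kv ZM0) (x := z) (y := 1)
    (by rwa [map_one])
  rw [Valuation.map_sub_swap, this, map_one]

theorem ne_of_v_one {z : Kv} (hz : Valued.v z = 1) : z ≠ 0 := by
  rintro rfl; simp at hz

theorem const_exp [CompleteSpace Kv] {π : Kv} (hπ0 : π ≠ 0) (hπ : Valued.v π < 1) {Γ : Set Kv}
    (hΓ : IsCompleteSetOfReps π Γ) {γ : Kv} (hγ : γ ∈ Γ) (m : ℤ) :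
    IsExpansion π Γ m (fun _ => γ) (γ / (1 - π) * π ^ m) := by
  refine ⟨fun _ _ => hγ, ?_⟩
  have h1 := v_one_sub hπ
  have h2 := ne_of_v_one h1
  have h : HasSum (fun n : ℕ => γ * π ^ n) (γ / (1 - π)) := by
    refine hasSum_of_rec hπ (b := fun _ => γ) (x := fun _ => γ / (1 - π)) (fun _ => hΓ.1 _ hγ) ?_ ?_
    · intro _
      rw [map_div₀, h1, div_one]
      exact hΓ.1 _ hγ
    · intro _
      field_simp
      ring
  have h3 := h.mul_right (π ^ m)
  have h4 : (fun n : ℕ => γ * π ^ (m + (n : ℤ))) = fun n : ℕ => γ * π ^ n * π ^ m := by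
    funext n
    rw [zpow_add₀ hπ0, zpow_natCast]
    ring
  show HasSum (fun n : ℕ => γ * π ^ (m + (n : ℤ))) _
  rw [h4]
  exact h3

theorem exists_ne_zero {π : Kv} (hπ : Valued.v π < 1) {Γ : Set Kv}
    (hΓ : IsCompleteSetOfReps π Γ) : ∃ γ ∈ Γ, γ ≠ 0 := by
  obtain ⟨γ, ⟨hγ, h⟩, -⟩ := hΓ.2 1 (by simp)
  refine ⟨γ, hγ, ?_⟩
  rintro rfl
  rw [sub_zero, map_one] at h
  exact absurd (h.trans_lt hπ) (lt_irrefl _)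

theorem rational_of_A [CompleteSpace Kv] {π : Kv} (hπ0 : π ≠ 0) (hπ : Valued.v π < 1) {Γ : Set Kv}
    (hΓ : IsCompleteSetOfReps π Γ) {K : Subfield Kv} (hA : HasPropertyA K π Γ) :
    π ∈ K ∧ Γ ⊆ (K : Set Kv) := by
  have h2 := ne_of_v_one (v_one_sub hπ)
  have key : ∀ γ ∈ Γ, ∀ m : ℤ, γ / (1 - π) * π ^ m ∈ K := fun γ hγ m =>
    (hA _ m _ (const_exp hπ0 hπ hΓ hγ m)).2 ⟨m, 1, le_rfl, one_pos, fun _ _ => rfl⟩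
  have hπK : π ∈ K := by
    obtain ⟨γ, hγ, h0⟩ := exists_ne_zero hπ hΓ
    have h3 := div_mem (key γ hγ 1) (key γ hγ 0)
    rw [zpow_one, zpow_zero, mul_one, mul_div_cancel_left₀ _ (div_ne_zero h0 h2)] at h3
    exact h3
  refine ⟨hπK, fun γ hγ => ?_⟩
  have h3 := mul_mem (key γ hγ 0) (sub_mem (one_mem K) hπK)
  rw [zpow_zero, mul_one, div_mul_cancel₀ _ h2] at h3
  exact h3

theorem rep_step {π : Kv} (hπ0 : π ≠ 0) {Γ : Set Kv}
    (hΓ : IsCompleteSetOfReps π Γ) {y : Kv} (hy : Valued.v y ≤ 1) :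
    ∃ γ ∈ Γ, ∃ y', Valued.v y' ≤ 1 ∧ y = γ + π * y' := by
  obtain ⟨γ, ⟨hγ, h⟩, -⟩ := hΓ.2 y hy
  refine ⟨γ, hγ, (y - γ) / π, ?_, ?_⟩
  · rw [map_div₀]
    exact div_le_one_of_le₀ h zero_le
  · rw [mul_div_cancel₀ _ hπ0]; ring

theorem greedy {π : Kv} (hπ0 : π ≠ 0) {Γ : Set Kv}
    (hΓ : IsCompleteSetOfReps π Γ) {y : Kv} (hy : Valued.v y ≤ 1) :
    ∃ b x : ℕ → Kv, (∀ n, b n ∈ Γ) ∧ (∀ n, Valued.v (x n) ≤ 1) ∧ x 0 = y ∧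
      ∀ n, x n = b n + π * x (n + 1) := by
  have h : ∀ y : {y : Kv // Valued.v y ≤ 1}, ∃ (γ : Kv) (y' : {y : Kv // Valued.v y ≤ 1}),
      γ ∈ Γ ∧ (y : Kv) = γ + π * y' := by
    intro y
    obtain ⟨γ, hγ, y', hy', h⟩ := rep_step hπ0 hΓ y.2
    exact ⟨γ, ⟨y', hy'⟩, hγ, h⟩
  choose d s hd hs using h
  let x : ℕ → {y : Kv // Valued.v y ≤ 1} := fun n => s^[n] ⟨y, hy⟩
  refine ⟨fun n => d (x n), fun n => x n, fun n => hd _, fun n => (x n).2, rfl, fun n => ?_⟩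
  have : x (n + 1) = s (x n) := Function.iterate_succ_apply' _ _ _
  show (x n : Kv) = d (x n) + π * (x (n + 1) : Kv)
  rw [this]
  exact hs _

theorem pow_v_lt {π : Kv} (hπ : Valued.v π < 1) {L : ℕ} (hL : 0 < L) : Valued.v (π ^ L) < 1 := by
  rw [map_pow]; exact pow_lt_one' hπ hL.ne'

def OO (F : Subfield Kv) : Subring Kv := (Valued.v : Valuation Kv ZM0).integer ⊓ F.toSubring

theorem mem_OO {F : Subfield Kv} {x : Kv} : x ∈ OO F ↔ Valued.v x ≤ 1 ∧ x ∈ F := Iff.rfl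

theorem mem_span_of_A [CompleteSpace Kv] {π : Kv} (hπ0 : π ≠ 0) (hπ : Valued.v π < 1) {Γ : Set Kv}
    (hΓ : IsCompleteSetOfReps π Γ) {K F : Subfield Kv} (hA : HasPropertyA K π Γ) (hπF : π ∈ F)
    {y : Kv} (hyK : y ∈ K) (hy : Valued.v y ≤ 1) : y ∈ Submodule.span (OO F) Γ := by
  obtain ⟨b, x, hb, hx, rfl, hrec⟩ := greedy hπ0 hΓ hy
  have hs := hasSum_of_rec hπ (fun n => hΓ.1 _ (hb n)) hx hrec
  have hexp : IsExpansion π Γ 0 (fun n => b n.toNat) (x 0) := by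
    refine ⟨fun n _ => hb _, ?_⟩
    convert hs using 2 with n
    simp
  obtain ⟨N, L, hN, hL, hper⟩ := (hA _ _ _ hexp).1 hyK
  have hform := exists_periodic_form hπ (fun n => hΓ.1 _ (hb n)) hs (N := N.toNat) (L := L.toNat)
    (by omega) (by
      intro n hn
      have := hper n (by omega)
      simp only at this
      rw [show ((n : ℤ) + L).toNat = n + L.toNat by omega] at this
      simpa using this)
  rw [hform]
  have hπO : π ∈ OO F := ⟨hπ.le, hπF⟩
  refine add_mem (Submodule.sum_mem _ fun i _ => ?_) (Submodule.sum_mem _ fun i _ => ?_)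
  · rw [mul_comm]
    exact Submodule.smul_mem _ (⟨π ^ i, pow_mem hπO i⟩ : OO F) (Submodule.subset_span (hb i))
  · rw [mul_comm]
    have h1 := v_one_sub (pow_v_lt hπ (L := L.toNat) (by omega))
    have h2 : (1 - π ^ L.toNat)⁻¹ ∈ OO F := 
      mem_OO.2 ⟨by rw [map_inv₀, h1, inv_one],
        F.inv_mem (F.sub_mem F.one_mem (F.pow_mem hπF _))⟩
    exact Submodule.smul_mem _ (⟨_, mul_mem (pow_mem hπO _) h2⟩ : OO F) 
      (Submodule.subset_span (hb _))

theorem span_of_A [CompleteSpace Kv] {π : Kv} (hπ0 : π ≠ 0) (hπ : Valued.v π < 1) {Γ : Set Kv}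
    (hΓ : IsCompleteSetOfReps π Γ) (hfin : Γ.Finite) {K C : Subfield Kv} (hA : HasPropertyA K π Γ)
    (hC : ∀ c ∈ C, c ≠ 0 → Valued.v c = 1) (hCK : C ≤ K) (hπK : π ∈ K) (hΓK : Γ ⊆ (K : Set Kv))
    {n : ℕ} {e : Fin n → Kv} (heK : ∀ i, e i ∈ K) (he : ResB C π e) :
    ∀ x ∈ K, ∃ f : Fin n → Kv, (∀ i, f i ∈ FF C π) ∧ x = ∑ i, f i * e i := by
  set F := FF C π with hF
  have hπF : π ∈ F := pi_mem C π
  have hπO : π ∈ OO F := ⟨hπ.le, hπF⟩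
  have hle : Submodule.span (OO F) Γ ≤ Submodule.span (OO F) (Set.range e) := by
    refine Submodule.le_of_le_smul_of_le_jacobson_bot (I := Ideal.span {(⟨π, hπO⟩ : OO F)})
      (Submodule.fg_span hfin) ?_ ?_
    · rw [Ideal.span_singleton_le_iff_mem, Ideal.mem_jacobson_bot]
      intro y
      have h1 : Valued.v (1 - (-(π * y))) = 1 := v_one_sub (by
        rw [Valuation.map_neg, map_mul]
        exact (mul_le_of_le_one_right' y.2.1).trans_lt hπ)
      refine IsUnit.of_mul_eq_one ⟨(1 - (-(π * y)))⁻¹, mem_OO.2 ⟨?_, ?_⟩⟩ ?_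
      · rw [map_inv₀, h1, inv_one]
      · exact F.inv_mem (F.sub_mem F.one_mem (F.neg_mem (F.mul_mem hπF y.2.2)))
      · apply Subtype.ext
        show (π * y + 1) * (1 - (-(π * y)))⁻¹ = 1
        have h2 := ne_of_v_one h1
        rw [show π * (y : Kv) + 1 = 1 - (-(π * y)) by ring, mul_inv_cancel₀ h2]
    · rw [Submodule.span_le]
      intro γ hγ
      obtain ⟨c, y, hc, hy, h⟩ := he.span' hπ0 γ (hΓ.1 _ hγ)
      have hyK : y ∈ K := by
        have : y = (γ - ∑ i, c i * e i) / π := by rw [h]; field_simp; ring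
        rw [this]
        exact div_mem (sub_mem (hΓK hγ) (sum_mem fun i _ => mul_mem (hCK (hc i)) (heK i))) hπK
      rw [h]
      refine Submodule.add_mem_sup (Submodule.sum_mem _ fun i _ => ?_) ?_
      · exact Submodule.smul_mem _ (⟨c i, C_le_one hC (hc i), C_le C π (hc i)⟩ : OO F)
          (Submodule.subset_span ⟨i, rfl⟩)
      · exact Submodule.smul_mem_smul (Ideal.mem_span_singleton_self (⟨π, hπO⟩ : OO F))
          (mem_span_of_A hπ0 hπ hΓ hA hπF hyK hy)
  intro x hx
  obtain ⟨k, hk⟩ := exists_pow_mul_le hπ x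
  have := hle (mem_span_of_A hπ0 hπ hΓ hA hπF (mul_mem (pow_mem hπK k) hx) hk)
  obtain ⟨c, hc⟩ := (Submodule.mem_span_range_iff_exists_fun _).1 this
  refine ⟨fun i => (π ^ k)⁻¹ * c i, fun i => mul_mem (inv_mem (pow_mem hπF k)) (c i).2.2, ?_⟩
  have h3 : ∑ i, (c i : Kv) * e i = π ^ k * x := hc
  have hpk : π ^ k ≠ 0 := pow_ne_zero _ hπ0
  simp only [mul_assoc]
  rw [← Finset.mul_sum, h3, inv_mul_cancel_left₀ hpk]


open Polynomial in
theorem aeval_le_one {π : Kv} {C : Subfield Kv} (hC : ∀ c ∈ C, c ≠ 0 → Valued.v c = 1)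
    (hπ : Valued.v π < 1) (P : C[X]) : Valued.v (aeval π P) ≤ 1 := by
  rw [aeval_eq_sum_range]
  refine Valuation.map_sum_le (Valued.v : Valuation Kv ZM0) fun i _ => ?_
  rw [Subfield.smul_def, smul_eq_mul, map_mul, map_pow]
  exact mul_le_one' (C_le_one hC (P.coeff i).2) (pow_le_one' hπ.le i)

open Polynomial in
theorem den_one {π : Kv} {C : Subfield Kv} {n : ℕ} {e : Fin n → Kv} {f : Fin n → Kv}
    (hf : ∀ i, f i ∈ FF C π) :
    ∃ D : C[X], aeval π D ≠ 0 ∧ ∃ P : Fin n → C[X],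
      aeval π D * (∑ i, f i * e i) = ∑ i, aeval π (P i) * e i := by
  classical
  refine Finset.sum_induction (fun i => f i * e i) (fun x => ∃ D : C[X], aeval π D ≠ 0 ∧
    ∃ P : Fin n → C[X], aeval π D * x = ∑ i, aeval π (P i) * e i) ?_ ?_ ?_
  · rintro x y ⟨D, hD, P, hP⟩ ⟨D', hD', P', hP'⟩
    refine ⟨D * D', by rw [map_mul]; exact mul_ne_zero hD hD',
      fun i => D' * P i + D * P' i, ?_⟩
    simp only [map_mul, map_add, add_mul, Finset.sum_add_distrib, mul_assoc]
    rw [← Finset.mul_sum, ← Finset.mul_sum, ← hP, ← hP']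
    ring
  · exact ⟨1, by simp, fun _ => 0, by simp⟩
  · intro i _
    obtain ⟨r, s, h⟩ := mem_FF (hf i)
    by_cases hs : aeval π s = 0
    · exact ⟨1, by simp, fun _ => 0, by simp [h, hs]⟩
    · refine ⟨s, hs, Pi.single i r, ?_⟩
      rw [Finset.sum_eq_single i]
      · rw [Pi.single_eq_same, h]; field_simp
      · intro j _ hj
        rw [Pi.single_eq_of_ne hj]; simp
      · simp

open Polynomial in
theorem den_finite {π : Kv} {C : Subfield Kv} {n : ℕ} {e : Fin n → Kv} {T : Set Kv}
    (hT : T.Finite) (h : ∀ x ∈ T, ∃ f : Fin n → Kv, (∀ i, f i ∈ FF C π) ∧ x = ∑ i, f i * e i) :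
    ∃ (D : C[X]) (M : ℕ), aeval π D ≠ 0 ∧ ∀ x ∈ T, ∃ P : Fin n → C[X],
      (∀ i, (P i).natDegree ≤ M) ∧ aeval π D * x = ∑ i, aeval π (P i) * e i := by
  classical
  induction T, hT using Set.Finite.induction_on with
  | empty => exact ⟨1, 0, by simp, by simp⟩
  | @insert a T _ _ ih =>
    obtain ⟨D, M, hD, hDM⟩ := ih fun x hx => h x (Set.mem_insert_of_mem _ hx)
    obtain ⟨f, hf, ha⟩ := h a (Set.mem_insert _ _)
    obtain ⟨D', hD', P', hP'⟩ := den_one (e := e) hf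
    rw [← ha] at hP'
    obtain ⟨M', hM'⟩ : ∃ M', ∀ i, (P' i).natDegree ≤ M' :=
      ⟨Finset.univ.sup fun i => (P' i).natDegree, fun i =>
        Finset.le_sup (f := fun i => (P' i).natDegree) (Finset.mem_univ i)⟩
    refine ⟨D * D', D.natDegree + D'.natDegree + M + M', 
      by rw [map_mul]; exact mul_ne_zero hD hD', ?_⟩
    rintro x (rfl | hx)
    · refine ⟨fun i => D * P' i, fun i => ?_, ?_⟩
      · have := natDegree_mul_le (p := D) (q := P' i)
        have := hM' i
        dsimp only
        omega
      · simp only [map_mul, mul_assoc]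
        rw [← Finset.mul_sum, ← hP']
    · obtain ⟨P, hP, hP2⟩ := hDM x hx
      refine ⟨fun i => D' * P i, fun i => ?_, ?_⟩
      · have := natDegree_mul_le (p := D') (q := P i)
        have := hP i
        dsimp only
        omega
      · simp only [map_mul, mul_assoc]
        rw [← Finset.mul_sum, ← hP2]
        ring

open Polynomial in
theorem S_finite {π : Kv} {C : Subfield Kv} [Finite C] {n : ℕ} (e : Fin n → Kv) (M : ℕ) :
    {z : Kv | ∃ P : Fin n → C[X], (∀ i, (P i).natDegree ≤ M) ∧
      z = ∑ i, aeval π (P i) * e i}.Finite := by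
  refine (Set.finite_range (fun g : Fin n → Fin (M + 1) → C => 
    ∑ i, (∑ k, (g i k : Kv) * π ^ (k : ℕ)) * e i)).subset ?_
  rintro z ⟨P, hP, rfl⟩
  refine ⟨fun i k => (P i).coeff k, ?_⟩
  refine Finset.sum_congr rfl fun i _ => ?_
  rw [aeval_eq_sum_range' (Nat.lt_succ_of_le (hP i)), Finset.sum_range]
  rfl

open Polynomial in
theorem S_step {π : Kv} {C : Subfield Kv}
    (hC : ∀ c ∈ C, c ≠ 0 → Valued.v c = 1) (hπ0 : π ≠ 0) (hπ : Valued.v π < 1)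
    {n : ℕ} {e : Fin n → Kv} (he : ResB C π e) {M : ℕ} {w : Kv} (hw : Valued.v w ≤ 1)
    {P Q : Fin n → C[X]} (hP : ∀ i, (P i).natDegree ≤ M) (hQ : ∀ i, (Q i).natDegree ≤ M)
    (h : π * w = ∑ i, aeval π (P i) * e i - ∑ i, aeval π (Q i) * e i) :
    ∃ R : Fin n → C[X], (∀ i, (R i).natDegree ≤ M) ∧ w = ∑ i, aeval π (R i) * e i := by
  have haev : ∀ P : C[X], aeval π P ∈ FF C π := by
    intro P
    rw [aeval_eq_sum_range]
    refine sum_mem fun i _ => ?_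
    exact mul_mem (C_le C π (P.coeff i).2) (pow_mem (pi_mem C π) i)
  have h1 : w = ∑ i, (aeval π (P i - Q i) / π) * e i := by
    have : π * w = π * ∑ i, (aeval π (P i - Q i) / π) * e i := by
      rw [h, Finset.mul_sum, ← Finset.sum_sub_distrib]
      refine Finset.sum_congr rfl fun i _ => ?_
      rw [map_sub]; field_simp
    exact mul_left_cancel₀ hπ0 this
  have h2 := coord_le_one hC hπ0 hπ he Finset.univ (fun i => aeval π (P i - Q i) / π)
    (fun i _ => Subfield.le_topologicalClosure _ (div_mem (haev _) (pi_mem C π))) (by rw [← h1]; exact hw)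
  have h3 : ∀ i, aeval π (P i - Q i) = π * aeval π (P i - Q i).divX := by
    intro i
    have h4 := congrArg (aeval π) (Polynomial.divX_mul_X_add (P i - Q i))
    rw [map_add, map_mul, aeval_X, aeval_C, 
      show algebraMap C Kv ((P i - Q i).coeff 0) = (((P i - Q i).coeff 0 : C) : Kv) from rfl] at h4
    have h5 : (((P i - Q i).coeff 0 : C) : Kv) = 0 := by
      by_contra hne
      have h6 := hC _ ((P i - Q i).coeff 0).2 hne
      have h7 : (((P i - Q i).coeff 0 : C) : Kv) = 
          π * (aeval π (P i - Q i) / π - aeval π (P i - Q i).divX) := by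
        rw [mul_sub, mul_div_cancel₀ _ hπ0, ← h4]; ring
      rw [h7, map_mul] at h6
      have h8 := Valuation.map_sub_le (Valued.v : Valuation Kv ZM0) (h2 i (Finset.mem_univ i))
        (aeval_le_one hC hπ (P i - Q i).divX)
      have h9 := (mul_le_of_le_one_right' h8).trans_lt hπ
      exact absurd h6 h9.ne
    rw [← h4, h5]; ring
  refine ⟨fun i => (P i - Q i).divX, fun i => ?_, ?_⟩
  · rw [natDegree_divX_eq_natDegree_tsub_one]
    have := natDegree_sub_le (P i) (Q i)
    have := hP i
    have := hQ i
    omega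
  · rw [h1]
    refine Finset.sum_congr rfl fun i _ => ?_
    rw [h3 i, mul_div_cancel_left₀ _ hπ0]

theorem periodic_of_mem [CompleteSpace Kv] {π : Kv} {C K : Subfield Kv} [Finite C]
    (hC : ∀ c ∈ C, c ≠ 0 → Valued.v c = 1) (hπ0 : π ≠ 0) (hπ : Valued.v π < 1)
    {n : ℕ} {e : Fin n → Kv} (he : ResB C π e) {Γ : Set Kv}
    (hΓ : IsCompleteSetOfReps π Γ) (hfin : Γ.Finite) (hΓK : Γ ⊆ (K : Set Kv)) 
    (hspan : ∀ x ∈ K, ∃ f : Fin n → Kv, (∀ i, f i ∈ FF C π) ∧ x = ∑ i, f i * e i)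
    {b : ℕ → Kv} (hb : ∀ n, b n ∈ Γ) {y : Kv} (hyK : y ∈ K)
    (hs : HasSum (fun n => b n * π ^ n) y) :
    ∃ N L : ℕ, 0 < L ∧ ∀ n, N ≤ n → b (n + L) = b n := by
  obtain ⟨x, rfl, hx1, hrec, -⟩ := rec_of_hasSum hπ (fun n => hΓ.1 _ (hb n)) hs
  obtain ⟨D, M, hD, hDM⟩ := den_finite (T := insert (x 0) Γ) (hfin.insert _) (by
    rintro z (rfl | hz)
    · exact hspan _ hyK
    · exact hspan _ (hΓK hz))
  have hDx : ∀ k, Polynomial.aeval π D * x k ∈ {z : Kv | ∃ P : Fin n → Polynomial C, 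
      (∀ i, (P i).natDegree ≤ M) ∧ z = ∑ i, Polynomial.aeval π (P i) * e i} := by
    intro k
    induction k with
    | zero => exact hDM _ (Set.mem_insert _ _)
    | succ k ih =>
      obtain ⟨P, hP, hP2⟩ := ih
      obtain ⟨Q, hQ, hQ2⟩ := hDM _ (Set.mem_insert_of_mem _ (hb k))
      refine S_step hC hπ0 hπ he ?_ hP hQ ?_
      · rw [map_mul]; exact mul_le_one' (aeval_le_one hC hπ D) (hx1 _)
      · rw [← hP2, ← hQ2]
        rw [hrec k]
        ring
  have : Finite {z : Kv | ∃ P : Fin n → Polynomial C, 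
      (∀ i, (P i).natDegree ≤ M) ∧ z = ∑ i, Polynomial.aeval π (P i) * e i} := S_finite e M
  obtain ⟨i, j, hij, h⟩ : ∃ i j, i < j ∧ x i = x j := by
    obtain ⟨i, j, hij, h⟩ := Finite.exists_ne_map_eq_of_infinite (fun k => (⟨_, hDx k⟩ :
      {z : Kv | ∃ P : Fin n → Polynomial C, 
      (∀ i, (P i).natDegree ≤ M) ∧ z = ∑ i, Polynomial.aeval π (P i) * e i}))
    have h' := mul_left_cancel₀ hD (Subtype.ext_iff.1 h)
    rcases lt_or_gt_of_ne hij with hlt | hlt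
    · exact ⟨i, j, hlt, h'⟩
    · exact ⟨j, i, hlt, h'.symm⟩
  have hbu : ∀ k l, x k = x l → b k = b l := by
    have hv : ∀ k, Valued.v (x k - b k) ≤ Valued.v π := by
      intro k
      have : x k - b k = π * x (k + 1) := by rw [hrec k]; ring
      rw [this, map_mul]
      exact mul_le_of_le_one_right' (hx1 _)
    intro k l hkl
    refine (hΓ.2 (x k) (hx1 k)).unique ⟨hb k, hv k⟩ ⟨hb l, ?_⟩
    rw [hkl]; exact hv l
  have hper : ∀ k, x (i + k) = x (j + k) := by
    intro k
    induction k with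
    | zero => exact h
    | succ k ih =>
      have h1 := hbu _ _ ih
      rw [hrec (i + k), hrec (j + k), h1] at ih
      exact mul_left_cancel₀ hπ0 (add_left_cancel ih)
  refine ⟨i, j - i, by omega, fun m hm => ?_⟩
  have := hbu _ _ (hper (m - i))
  rw [show i + (m - i) = m by omega, show j + (m - i) = m + (j - i) by omega] at this
  exact this.symm

theorem A_of [CompleteSpace Kv] {π : Kv} {C K : Subfield Kv} [Finite C]
    (hC : ∀ c ∈ C, c ≠ 0 → Valued.v c = 1) (hπ0 : π ≠ 0) (hπ : Valued.v π < 1)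
    (hπK : π ∈ K)
    {n : ℕ} {e : Fin n → Kv} (he : ResB C π e) {Γ : Set Kv}
    (hΓ : IsCompleteSetOfReps π Γ) (hfin : Γ.Finite) (hΓK : Γ ⊆ (K : Set Kv)) 
    (hspan : ∀ x ∈ K, ∃ f : Fin n → Kv, (∀ i, f i ∈ FF C π) ∧ x = ∑ i, f i * e i) :
    HasPropertyA K π Γ := by
  rintro x m a ⟨ha, hsum⟩
  have hb : ∀ n : ℕ, a (m + n) ∈ Γ := fun n => ha _ (by omega)
  have hpm : π ^ m ≠ 0 := zpow_ne_zero _ hπ0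
  have hs : HasSum (fun n : ℕ => a (m + n) * π ^ n) (x * (π ^ m)⁻¹) := by
    have h3 := hsum.mul_right ((π ^ m)⁻¹)
    have h4 : (fun n : ℕ => a (m + n) * π ^ n) = 
        fun n : ℕ => a (m + n) * π ^ (m + (n : ℤ)) * (π ^ m)⁻¹ := by
      funext n
      rw [zpow_add₀ hπ0, zpow_natCast]
      field_simp
    rw [h4]
    exact h3
  constructor
  · intro hx
    obtain ⟨N, L, hL, hper⟩ := periodic_of_mem hC hπ0 hπ he hΓ hfin hΓK hspan (b := fun n => a (m + n))
      hb (mul_mem hx (inv_mem (zpow_mem hπK m))) hs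
    refine ⟨m + N, L, by omega, by omega, fun k hk => ?_⟩
    have := hper (k - m).toNat (by omega)
    rw [show m + (((k - m).toNat + L : ℕ) : ℤ) = k + L by omega,
      show m + (((k - m).toNat : ℕ) : ℤ) = k by omega] at this
    exact this
  · rintro ⟨N, L, hN, hL, hper⟩
    have hform := exists_periodic_form hπ (b := fun n => a (m + n)) (fun n => hΓ.1 _ (hb n)) hs 
      (N := (N - m).toNat) (L := L.toNat) (by omega) (by
        intro k hk
        have := hper (m + k) (by omega)
        rw [← this]
        show a _ = a _
        congr 1
        omega)
    have hmem : x * (π ^ m)⁻¹ ∈ K := by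
      rw [hform]
      refine add_mem (sum_mem fun i _ => ?_) (sum_mem fun i _ => ?_)
      · exact mul_mem (hΓK (hb _)) (pow_mem hπK _)
      · exact mul_mem (hΓK (hb _)) (mul_mem (pow_mem hπK _) 
          (inv_mem (sub_mem (one_mem _) (pow_mem hπK _))))
    have := mul_mem hmem (zpow_mem hπK m)
    rwa [inv_mul_cancel_right₀ hpm] at this

theorem main (p : ℕ) [Fact p.Prime] (K : Subfield Kv)
    (hK : IsGlobalFunctionFieldCompletion p K)
    (π : Kv) (hπ0 : π ≠ 0) (hπ : Valued.v π < 1)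
    (Γ : Set Kv) (hΓ : IsCompleteSetOfReps π Γ) :
    HasPropertyA K π Γ ↔
      ((π ∈ K ∧ Γ ⊆ (K : Set Kv)) ∧
        degOver (FqPi p K π) (K : Set Kv) = Module.rank ↥(FqPiCompletion p K π) Kv) := by
  have := hK.charP
  have := hK.complete
  have hC := CF_v p K
  have key : π ∈ K → ∃ (n : ℕ) (e : Fin n → Kv), (∀ i, e i ∈ K) ∧ ResB (CF p K) π e ∧
      (degOver (FqPi p K π) (K : Set Kv) = Module.rank ↥(FqPiCompletion p K π) Kv ↔
      ∀ x ∈ K, ∃ f : Fin n → Kv, (∀ i, f i ∈ FF (CF p K) π) ∧ x = ∑ i, f i * e i) := by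
    intro hπK
    have hfin := finite_K p hK hπ0 hπ hπK (CF p K)
    obtain ⟨n, e, heK, he⟩ := exists_resB hK.dense hC hπ0 hπ hfin
    exact ⟨n, e, heK, he, deg_iff hC hπ0 hπ heK he hfin⟩
  constructor
  · intro hA
    obtain ⟨hπK, hΓK⟩ := rational_of_A hπ0 hπ hΓ hA
    obtain ⟨n, e, heK, he, hiff⟩ := key hπK
    refine ⟨⟨hπK, hΓK⟩, hiff.2 ?_⟩
    exact span_of_A hπ0 hπ hΓ (finite_Gamma p hK hπ0 hπ hπK hΓ) hA hC (CF_le p K) hπK hΓK heK he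
  · rintro ⟨⟨hπK, hΓK⟩, hdeg⟩
    obtain ⟨n, e, heK, he, hiff⟩ := key hπK
    have := finite_CF p hK hπ0 hπ hπK
    exact A_of hC hπ0 hπ hπK he hΓ (finite_Gamma p hK hπ0 hπ hπK hΓ) hΓK (hiff.1 hdeg)

end PropA

/-- **Theorem 1.1.** `(Γ, π)` has property A if and only if (i) `π` and the
elements of `Γ` are rational (lie in `K`), and (ii) `[K : 𝔽_q(π)] = [K_v : 𝔽_q((π))]`. -/
theorem propertyA_iff_rational_and_degree_eq
    {Kv : Type*} [Field Kv] [Valued Kv ZM0]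
    (p : ℕ) [Fact p.Prime] (K : Subfield Kv)
    (hK : IsGlobalFunctionFieldCompletion p K)
    (π : Kv) (hπ0 : π ≠ 0) (hπ : Valued.v π < 1)
    (Γ : Set Kv) (hΓ : IsCompleteSetOfReps π Γ) :
    HasPropertyA K π Γ ↔
      ((π ∈ K ∧ Γ ⊆ (K : Set Kv)) ∧
        degOver (FqPi p K π) (K : Set Kv) = Module.rank ↥(FqPiCompletion p K π) Kv) := by
  exact PropA.main p K hK π hπ0 hπ Γ hΓ
end

section
/- If (Γ, π) has property A, then π ∈ K and every element of Γ lies in K. -/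
/-!
Common setup: `Kv` is a complete field equipped with a (normalized, `ℤ`-valued)
valuation `Valued.v : Kv → ℤₘ₀ = WithZero (Multiplicative ℤ)`, and `K` is a dense
subfield of `Kv` (so that `Kv` is the completion `K_v` of `K`).  The valuation is
written multiplicatively: the additive valuation of `x` is `n` iff
`Valued.v x = ofAdd (-n)`; the valuation ring `A_v` is `{x | Valued.v x ≤ 1}` and
`π A_v = {x | Valued.v x ≤ Valued.v π}`.
-/

open scoped Multiplicative

variable {Kv : Type*} [Field Kv] [Valued Kv ZM0]

/-- If `(Γ, π)` has property A, then `π ∈ K` and every element of `Γ` lies in `K`. -/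
theorem rational_of_propertyA
    {Kv : Type*} [Field Kv] [Valued Kv ZM0]
    (p : ℕ) [Fact p.Prime] (K : Subfield Kv)
    (hK : IsGlobalFunctionFieldCompletion p K)
    (π : Kv) (hπ0 : π ≠ 0) (hπ : Valued.v π < 1)
    (Γ : Set Kv) (hΓ : IsCompleteSetOfReps π Γ)
    (hA : HasPropertyA K π Γ) :
    π ∈ K ∧ Γ ⊆ (K : Set Kv) := by
  have hcomp := hK.complete
  have hne : (1 : Kv) - π ≠ 0 := by
    intro h
    rw [sub_eq_zero] at h
    rw [← h, map_one] at hπ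
    exact lt_irrefl _ hπ
  have hsum : Summable (fun n : ℕ => π ^ n) := by
    have hna : NonarchimedeanAddGroup Kv :=
      { is_nonarchimedean := by
          intro U hU
          obtain ⟨r, hr⟩ := Valued.mem_nhds_zero.1 hU
          exact ⟨⟨Valuation.ltAddSubgroup (Valued.v (R := Kv)).restrict r,
            Valued.isOpen_ball Kv r.1⟩, hr⟩ }
    apply NonarchimedeanAddGroup.summable_of_tendsto_cofinite_zero
    rw [Nat.cofinite_eq_atTop]
    exact Valued.tendsto_zero_pow_of_v_lt_one hπ
  have hgeo : HasSum (fun n : ℕ => π ^ n) (1 - π)⁻¹ := by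
    have h1 := hsum.hasSum
    have h2 := hsum.tsum_eq_zero_add
    have h3 : (∑' n : ℕ, π ^ n) = (1 - π)⁻¹ := by
      simp only [pow_succ, tsum_mul_right, pow_zero] at h2
      refine eq_inv_of_mul_eq_one_left ?_
      linear_combination h2
    rwa [h3] at h1
  have key : ∀ γ ∈ Γ, ∀ m : ℤ, γ * π ^ m * (1 - π)⁻¹ ∈ K := by
    intro γ hγ m
    refine (hA _ m (fun _ => γ) ⟨fun _ _ => hγ, ?_⟩).2 ⟨m, 1, le_rfl, one_pos, fun _ _ => rfl⟩
    have := hgeo.mul_left (γ * π ^ m)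
    have e : (fun n : ℕ => γ * π ^ (m + (n : ℤ))) = fun n : ℕ => γ * π ^ m * π ^ n := by
      funext n
      rw [zpow_add₀ hπ0, zpow_natCast, mul_assoc]
    rw [← e] at this
    exact this
  obtain ⟨γ, ⟨hγ, hγ1⟩, -⟩ := hΓ.2 1 (by simp)
  have hγ0 : γ ≠ 0 := by
    rintro rfl
    simp only [sub_zero, map_one] at hγ1
    exact absurd hγ1 (not_le.2 hπ)
  have hπK : π ∈ K := by
    have h := K.div_mem (key γ hγ 1) (key γ hγ 0)
    have e : γ * π ^ (1 : ℤ) * (1 - π)⁻¹ / (γ * π ^ (0 : ℤ) * (1 - π)⁻¹) = π := by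
      rw [zpow_one, zpow_zero]
      field_simp
    rwa [e] at h
  refine ⟨hπK, fun δ hδ => ?_⟩
  have h := K.mul_mem (key δ hδ 0) (K.sub_mem K.one_mem hπK)
  rw [zpow_zero, mul_one, inv_mul_cancel_right₀ hne] at h
  exact h
end

section
/- Suppose π ∈ A and Γ ⊆ A. If [K : 𝔽_q(π)] > [K_v : 𝔽_q((π))], then (Γ, π) does not have property A. -/
/-!
Common setup: `Kv` is a complete field equipped with a (normalized, `ℤ`-valued)
valuation `Valued.v : Kv → ℤₘ₀ = WithZero (Multiplicative ℤ)`, and `K` is a dense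
subfield of `Kv` (so that `Kv` is the completion `K_v` of `K`).  The valuation is
written multiplicatively: the additive valuation of `x` is `n` iff
`Valued.v x = ofAdd (-n)`; the valuation ring `A_v` is `{x | Valued.v x ≤ 1}` and
`π A_v = {x | Valued.v x ≤ Valued.v π}`.
-/

open scoped Multiplicative

variable {Kv : Type*} [Field Kv] [Valued Kv ZM0]

section helpers
open Polynomial

lemma aux_exists_pow {a b : ZM0} (ha : a < 1) (hb : b ≠ 0) : ∃ n : ℕ, a ^ n < b :=
  exists_pow_lt₀ ha (Units.mk0 b hb)

lemma aux_nhds {Kv : Type*} [Field Kv] [Valued Kv ZM0] {π : Kv} (hπ : Valued.v π < 1)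
    {s : Set Kv} {x : Kv} (hs : s ∈ nhds x) :
    ∃ n : ℕ, ∀ y, Valued.v (y - x) ≤ Valued.v π ^ n → y ∈ s := by
  rw [Valued.mem_nhds] at hs
  obtain ⟨γ, hγ⟩ := hs
  simp_rw [Valuation.restrict_lt_iff_lt_embedding] at hγ
  obtain ⟨n, hn⟩ := aux_exists_pow hπ (b := MonoidWithZeroHom.ValueGroup₀.embedding γ.1) (by simp)
  exact ⟨n, fun y hy => hγ (lt_of_le_of_lt hy hn)⟩

lemma aux_ball {Kv : Type*} [Field Kv] [Valued Kv ZM0] {π : Kv} (hπ0 : π ≠ 0) (x : Kv) (n : ℕ) :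
    {y : Kv | Valued.v (y - x) < Valued.v π ^ n} ∈ nhds x := by
  rw [Valued.mem_nhds]
  refine ⟨Units.mk0 (Valued.v.restrict (π ^ n)) (by simp [hπ0]), ?_⟩
  intro y hy
  simpa [← map_pow, Valuation.restrict_lt_iff] using hy

lemma aux_zero {Kv : Type*} [Field Kv] [Valued Kv ZM0] {π : Kv} (hπ : Valued.v π < 1)
    {x : Kv} (h : ∀ n : ℕ, Valued.v x ≤ Valued.v π ^ n) : x = 0 := by
  by_contra hx
  obtain ⟨n, hn⟩ := aux_exists_pow hπ (b := Valued.v x) (by simpa using hx)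
  exact absurd (h n) (not_le.2 hn)

/-- existence of expansions with remainders. -/
lemma aux_expansion {Kv : Type*} [Field Kv] [Valued Kv ZM0] {π : Kv} (hπ0 : π ≠ 0)
    (hπ : Valued.v π < 1) {Γ : Set Kv} (hΓ : IsCompleteSetOfReps π Γ) {x : Kv}
    (hx : Valued.v x ≤ 1) :
    ∃ (a y : ℕ → Kv), y 0 = x ∧ (∀ n, a n ∈ Γ) ∧ (∀ n, Valued.v (y n) ≤ 1) ∧
      ∀ n, y n = a n + π * y (n + 1) := by
  have h := fun z : {z : Kv // Valued.v z ≤ 1} => (hΓ.2 z.1 z.2).exists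
  choose d hd using h
  have vπ : Valued.v π ≠ 0 := by simpa using hπ0
  let T : {z : Kv // Valued.v z ≤ 1} → {z : Kv // Valued.v z ≤ 1} := fun z =>
    ⟨(z.1 - d z) / π, by
      rw [map_div₀]
      exact div_le_one_of_le₀ (hd z).2 zero_le⟩
  let Y : ℕ → {z : Kv // Valued.v z ≤ 1} := fun n => T^[n] ⟨x, hx⟩
  refine ⟨fun n => d (Y n), fun n => (Y n).1, rfl, fun n => (hd _).1, fun n => (Y n).2, ?_⟩
  intro n
  have : Y (n + 1) = T (Y n) := Function.iterate_succ_apply' _ _ _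
  show (Y n).1 = d (Y n) + π * (Y (n + 1)).1
  rw [this]
  simp only [T]
  field_simp
  ring

lemma aux_partial {Kv : Type*} [Field Kv] {π : Kv} {a y : ℕ → Kv}
    (h : ∀ n, y n = a n + π * y (n + 1)) (k n : ℕ) :
    y k = ∑ j ∈ Finset.range n, a (k + j) * π ^ j + π ^ n * y (k + n) := by
  induction n with
  | zero => simp
  | succ n ih =>
    rw [ih, Finset.sum_range_succ, h (k + n)]
    rw [show k + (n + 1) = k + n + 1 by ring]
    ring

lemma aux_hasSum {Kv : Type*} [Field Kv] [Valued Kv ZM0] {π : Kv}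
    (hπ : Valued.v π < 1) {a y : ℕ → Kv} (ha : ∀ n, Valued.v (a n) ≤ 1)
    (hy : ∀ n, Valued.v (y n) ≤ 1)
    (h : ∀ n, y n = a n + π * y (n + 1)) : HasSum (fun n : ℕ => a n * π ^ n) (y 0) := by
  intro s hs
  obtain ⟨n, hn⟩ := aux_nhds hπ hs
  rw [SummationFilter.unconditional_filter, Filter.mem_map, Filter.mem_atTop_sets]
  refine ⟨Finset.range n, fun t ht => hn _ ?_⟩
  show Valued.v (∑ b ∈ t, a b * π ^ b - y 0) ≤ _
  rw [aux_partial h 0 n, ← Finset.sum_sdiff ht]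
  simp only [zero_add]
  rw [show ∀ A B C : Kv, A + B - (B + C) = A - C by intros; ring]
  refine (Valuation.map_sub _ _ _).trans (max_le ?_ ?_)
  · refine Valuation.map_sum_le _ ?_
    intro i hi
    simp only [Finset.mem_sdiff, Finset.mem_range, not_lt] at hi
    rw [map_mul, map_pow]
    calc _ ≤ 1 * Valued.v π ^ i := mul_le_mul_left (ha i) _
      _ = Valued.v π ^ i := one_mul _
      _ ≤ _ := pow_le_pow_right_of_le_one' hπ.le hi.2
  · rw [map_mul, map_pow]
    exact mul_le_of_le_one_right' (hy n)

lemma aux_mem {Kv : Type*} [Field Kv] [Valued Kv ZM0] {π : Kv} (hπ0 : π ≠ 0)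
    (hπ : Valued.v π < 1) {Γ : Set Kv} (hΓ : IsCompleteSetOfReps π Γ) {K : Subfield Kv}
    (hA : HasPropertyA K π Γ) {F : Subfield Kv} (hF : π ∈ F) {T : AddSubgroup Kv}
    (hT : Γ ⊆ T) (hm : ∀ s ∈ F, Valued.v s ≤ 1 → ∀ x ∈ T, s * x ∈ T) {x : Kv}
    (hxK : x ∈ K) (hx : Valued.v x ≤ 1) : x ∈ T := by
  obtain ⟨a, y, rfl, ha, hy, h⟩ := aux_expansion hπ0 hπ hΓ hx
  have hs := aux_hasSum hπ (fun n => hΓ.1 _ (ha n)) hy h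
  obtain ⟨N, L, hN, hL, hper⟩ := (hA (y 0) 0 (fun n => a n.toNat) ⟨fun n _ => ha _, by
    simpa using hs⟩).1 hxK
  lift N to ℕ using hN
  lift L to ℕ using hL.le
  have hper' : ∀ n : ℕ, N ≤ n → a (n + L) = a n := by
    intro n hn
    have := hper n (by exact_mod_cast hn)
    have e : ((n : ℤ) + L).toNat = n + L := by omega
    simpa only [e, Int.toNat_natCast] using this
  have hπT : ∀ n : ℕ, ∀ x ∈ T, π ^ n * x ∈ T := fun n =>
    hm _ (pow_mem hF n) (by rw [map_pow]; exact pow_le_one' hπ.le n)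
  have hsum : ∀ k n : ℕ, ∑ j ∈ Finset.range n, a (k + j) * π ^ j ∈ T := by
    intro k n
    refine sum_mem fun j _ => ?_
    rw [mul_comm]
    exact hπT _ _ (hT (ha _))
  have hyN : y (N + L) = y N := by
    rw [← sub_eq_zero]
    refine aux_zero hπ fun n => ?_
    rw [aux_partial h (N + L) n, aux_partial h N n]
    have : ∑ j ∈ Finset.range n, a (N + L + j) * π ^ j = ∑ j ∈ Finset.range n, a (N + j) * π ^ j := by
      refine Finset.sum_congr rfl fun j _ => ?_
      rw [show N + L + j = N + j + L by ring, hper' _ (by omega)]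
    rw [this, add_sub_add_left_eq_sub, ← mul_sub, map_mul, map_pow]
    exact mul_le_of_le_one_right' ((Valuation.map_sub _ _ _).trans (max_le (hy _) (hy _)))
  have h1 : Valued.v (1 - π ^ L) = 1 := by
    apply Valuation.map_one_sub_of_lt
    rw [map_pow]
    exact pow_lt_one₀ zero_le hπ (by omega)
  have h2 : (1 - π ^ L) ≠ 0 := by
    intro h0; rw [h0] at h1; simp at h1
  have hyNT : y N ∈ T := by
    have e := aux_partial h N L
    rw [hyN] at e
    have : y N = (1 - π ^ L)⁻¹ * ∑ j ∈ Finset.range L, a (N + j) * π ^ j := by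
      rw [eq_inv_mul_iff_mul_eq₀ h2]
      linear_combination e
    rw [this]
    exact hm _ (inv_mem (sub_mem (one_mem _) (pow_mem hF _))) (by rw [map_inv₀, h1, inv_one]) _
      (hsum _ _)
  rw [aux_partial h 0 N]
  refine add_mem (hsum _ _) (hπT _ _ ?_)
  simpa using hyNT

/-- main step -/
lemma aux_main {Kv : Type*} [Field Kv] [Valued Kv ZM0] {π : Kv} (hπ0 : π ≠ 0)
    (hπ : Valued.v π < 1) {Γ : Set Kv} (hΓ : IsCompleteSetOfReps π Γ) (hfin : Γ.Finite)
    {K : Subfield Kv} (hπK : π ∈ K) (hΓK : Γ ⊆ (K : Set Kv))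
    (hA : HasPropertyA K π Γ) {F : Subfield Kv} (hF : π ∈ F) (hFK : F ≤ K) :
    degOver F (K : Set Kv) ≤ Module.rank F.topologicalClosure Kv := by
  set W := Submodule.span F (K : Set Kv) with hW
  have hWK : ∀ x, x ∈ W → x ∈ K := by
    intro x hx
    induction hx using Submodule.span_induction with
    | mem x h => exact h
    | zero => exact zero_mem _
    | add x y _ _ h1 h2 => exact add_mem h1 h2
    | smul a x _ h => exact mul_mem (hFK a.2) h
  have hKW : ∀ x ∈ K, x ∈ W := fun x hx => Submodule.subset_span hx
  let b := Module.Basis.ofVectorSpace F W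
  have key : LinearIndependent F.topologicalClosure (fun i => (b i : Kv)) := by
    rw [linearIndependent_iff']
    intro s g hg i0 hi0
    by_contra hne
    have hne' : (g i0 : Kv) ≠ 0 := by simpa using hne
    have vg : Valued.v (g i0 : Kv) ≠ 0 := by simpa using hne'
    have vπ : Valued.v π ≠ 0 := by simpa using hπ0
    -- bound
    obtain ⟨C, hC0, hC⟩ : ∃ C : ZM0, C ≠ 0 ∧ ∀ w : W, (w : Kv) ∈ Γ → Valued.v (b.coord i0 w : Kv) ≤ C := by
      have hf : ((fun w : W => Valued.v (b.coord i0 w : Kv)) '' {w : W | (w : Kv) ∈ Γ}).Finite :=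
        (hfin.preimage Subtype.val_injective.injOn).image _
      obtain ⟨C, hC⟩ := hf.bddAbove
      refine ⟨max C 1, (lt_of_lt_of_le zero_lt_one (le_max_right _ _)).ne', fun w hw => ?_⟩
      exact (hC ⟨w, hw, rfl⟩).trans (le_max_left _ _)
    obtain ⟨N, hN⟩ := aux_exists_pow hπ (b := Valued.v (g i0 : Kv) / C) (by simp [hC0, hne'])
    -- approximants
    have happ : ∀ i : _, ∃ r : F, Valued.v ((r : Kv) - g i) * Valued.v (b i : Kv) ≤ Valued.v π ^ N ∧
        Valued.v ((r : Kv) - g i) < Valued.v (g i0 : Kv) := by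
      intro i
      have hbi : Valued.v (b i : Kv) ≠ 0 := by
        simpa using b.ne_zero i
      obtain ⟨M1, hM1⟩ := aux_exists_pow hπ (b := Valued.v π ^ N / Valued.v (b i : Kv))
        (by simp [hπ0, b.ne_zero i])
      obtain ⟨M2, hM2⟩ := aux_exists_pow hπ vg
      have hcl : (g i : Kv) ∈ closure (F : Set Kv) := (g i).2
      rw [mem_closure_iff_nhds] at hcl
      obtain ⟨r, hr, hrF⟩ := hcl _ (Filter.inter_mem (aux_ball hπ0 _ M1) (aux_ball hπ0 _ M2))
      refine ⟨⟨r, hrF⟩, ?_, hr.2.trans hM2⟩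
      have := (lt_trans hr.1 hM1).le
      rwa [le_div_iff₀ (zero_lt_iff.2 hbi)] at this
    choose r hr1 hr2 using happ
    let z : W := ∑ i ∈ s, r i • b i
    have hz : Valued.v (z : Kv) ≤ Valued.v π ^ N := by
      have : (z : Kv) = ∑ i ∈ s, ((r i : Kv) - g i) * b i := by
        have e : ∑ i ∈ s, (g i : Kv) * b i = 0 := hg
        simp_rw [sub_mul]
        rw [Finset.sum_sub_distrib, e, sub_zero]
        simp [z, Subfield.smul_def]
      rw [this]
      refine Valuation.map_sum_le _ fun i _ => ?_
      rw [map_mul]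
      exact hr1 i
    have hcz : b.coord i0 z = r i0 := by
      classical
      have hb : ∀ i, b.coord i0 (r i • b i) = if i = i0 then r i else 0 := by
        intro i
        rw [map_smul, Module.Basis.coord_apply, Module.Basis.repr_self, Finsupp.single_apply]
        split_ifs <;> simp
      show b.coord i0 (∑ i ∈ s, r i • b i) = r i0
      rw [map_sum, Finset.sum_congr rfl (fun i _ => hb i), Finset.sum_ite_eq' s i0 r, if_pos hi0]
    have vr : Valued.v (r i0 : Kv) = Valued.v (g i0 : Kv) := by
      have := Valuation.map_add_eq_of_lt_right Valued.v (hr2 i0)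
      simpa using this
    let T : AddSubgroup Kv :=
      { carrier := {x | ∃ w : W, (w : Kv) = x ∧ Valued.v (b.coord i0 w : Kv) ≤ C}
        zero_mem' := ⟨0, rfl, by simp⟩
        add_mem' := by
          rintro _ _ ⟨w, rfl, hw⟩ ⟨w', rfl, hw'⟩
          refine ⟨w + w', rfl, ?_⟩
          rw [map_add]
          exact (Valuation.map_add _ _ _).trans (max_le hw hw')
        neg_mem' := by
          rintro _ ⟨w, rfl, hw⟩
          refine ⟨-w, rfl, ?_⟩
          rw [map_neg]
          simpa using hw }
    have hx : (π ^ N)⁻¹ * (z : Kv) ∈ T := by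
      refine aux_mem hπ0 hπ hΓ hA hF (T := T) ?_ ?_ ?_ ?_
      · intro γ hγ
        exact ⟨⟨γ, hKW _ (hΓK hγ)⟩, rfl, hC _ hγ⟩
      · rintro s hs hs1 _ ⟨w, rfl, hw⟩
        refine ⟨(⟨s, hs⟩ : F) • w, rfl, ?_⟩
        rw [map_smul, smul_eq_mul, Subfield.coe_mul, map_mul]
        exact (mul_le_mul' hs1 hw).trans (one_mul _).le
      · exact mul_mem (inv_mem (pow_mem hπK _)) (hWK _ z.2)
      · rw [map_mul, map_inv₀, map_pow]
        exact (inv_mul_le_one₀ (pow_pos (zero_lt_iff.2 vπ) N)).2 hz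
    obtain ⟨w, hw, hwC⟩ := hx
    have hzw : z = (⟨π, hF⟩ ^ N : F) • w := by
      apply Subtype.ext
      show (z : Kv) = π ^ N * (w : Kv)
      rw [hw]
      field_simp
    rw [hzw, map_smul, smul_eq_mul] at hcz
    have : Valued.v (r i0 : Kv) ≤ Valued.v π ^ N * C := by
      rw [← hcz, Subfield.coe_mul, map_mul]
      rw [show (((⟨π, hF⟩ ^ N : F)) : Kv) = π ^ N from rfl, map_pow]
      exact mul_le_mul' le_rfl hwC
    rw [vr] at this
    rw [lt_div_iff₀ (zero_lt_iff.2 hC0)] at hN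
    exact absurd this (not_le.2 hN)
  have := key.cardinal_le_rank
  rw [degOver, ← b.mk_eq_rank'']
  exact this

lemma aux_bot_pow {Kv : Type*} [Field Kv] (p : ℕ) [Fact p.Prime] [CharP Kv p]
    {c : Kv} (hc : c ∈ (⊥ : Subfield Kv)) : c ^ p = c := by
  rw [← ZMod.fieldRange_castHom_eq_bot p] at hc
  obtain ⟨z, rfl⟩ := hc
  rw [← map_pow, ZMod.pow_card]

lemma aux_bot_finite {Kv : Type*} [Field Kv] (p : ℕ) [Fact p.Prime] [CharP Kv p] :
    Finite (⊥ : Subfield Kv) := by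
  rw [← ZMod.fieldRange_castHom_eq_bot p]
  exact Set.finite_range _

lemma aux_bot_val {Kv : Type*} [Field Kv] [Valued Kv ZM0] (p : ℕ) [Fact p.Prime] [CharP Kv p]
    {c : Kv} (hc : c ∈ (⊥ : Subfield Kv)) (h0 : c ≠ 0) : Valued.v c = 1 := by
  have h1 := aux_bot_pow p hc
  have hp := (Fact.out : p.Prime).two_le
  have h2 : c ^ (p - 1) = 1 := by
    have : c ^ (p - 1) * c = 1 * c := by
      rw [← pow_succ, Nat.sub_add_cancel (by omega), h1, one_mul]
    exact mul_right_cancel₀ h0 this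
  have h3 : Valued.v c ^ (p - 1) = 1 := by rw [← map_pow, h2, map_one]
  exact (pow_eq_one_iff_of_nonneg zero_le (by omega)).1 h3

lemma aux_bot_val_le {Kv : Type*} [Field Kv] [Valued Kv ZM0] (p : ℕ) [Fact p.Prime] [CharP Kv p]
    (c : (⊥ : Subfield Kv)) : Valued.v (c : Kv) ≤ 1 := by
  by_cases h : (c : Kv) = 0
  · simp [h]
  · exact (aux_bot_val p c.2 h).le

lemma aux_poly_val {Kv : Type*} [Field Kv] [Valued Kv ZM0] (p : ℕ) [Fact p.Prime] [CharP Kv p]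
    {π : Kv} (hπ : Valued.v π < 1) (f : (⊥ : Subfield Kv)[X]) : Valued.v (aeval π f) ≤ 1 := by
  rw [aeval_eq_sum_range]
  refine Valuation.map_sum_le _ fun i _ => ?_
  rw [Subfield.smul_def, smul_eq_mul, map_mul, map_pow]
  exact mul_le_one' (aux_bot_val_le p _) (pow_le_one' hπ.le _)

lemma aux_poly {Kv : Type*} [Field Kv] [Valued Kv ZM0] (p : ℕ) [Fact p.Prime] [CharP Kv p]
    {π : Kv} (hπ : Valued.v π < 1) {f : (⊥ : Subfield Kv)[X]} (hf : f ≠ 0) :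
    ∃ (n : ℕ) (c : (⊥ : Subfield Kv)) (u : Kv), c ≠ 0 ∧ Valued.v u ≤ 1 ∧
      aeval π f = π ^ n * (c + π * u) := by
  obtain ⟨g, hg, hg'⟩ := exists_eq_pow_rootMultiplicity_mul_and_not_dvd f hf 0
  rw [map_zero, sub_zero] at hg hg'
  refine ⟨rootMultiplicity 0 f, g.coeff 0, aeval π g.divX, ?_, aux_poly_val p hπ _, ?_⟩
  · rwa [Ne, ← X_dvd_iff]
  · conv_lhs => rw [hg, ← divX_mul_X_add g]
    simp
    left
    rw [add_comm, mul_comm]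
    rfl

lemma aux_val_unit {Kv : Type*} [Field Kv] [Valued Kv ZM0] (p : ℕ) [Fact p.Prime] [CharP Kv p]
    {π : Kv} (hπ : Valued.v π < 1) {c : (⊥ : Subfield Kv)} (hc : c ≠ 0) {u : Kv}
    (hu : Valued.v u ≤ 1) : Valued.v (c + π * u) = 1 := by
  have h1 : Valued.v (c : Kv) = 1 := aux_bot_val p c.2 (by simpa using hc)
  have h2 : Valued.v (π * u) < Valued.v (c : Kv) := by
    rw [h1, map_mul]
    exact lt_of_le_of_lt (mul_le_of_le_one_right' hu) hπ
  rw [Valuation.map_add_eq_of_lt_left _ h2, h1]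

lemma aux_trans {Kv : Type*} [Field Kv] [Valued Kv ZM0] (p : ℕ) [Fact p.Prime] [CharP Kv p]
    {π : Kv} (hπ0 : π ≠ 0) (hπ : Valued.v π < 1) {f : (⊥ : Subfield Kv)[X]} (hf : f ≠ 0) :
    aeval π f ≠ 0 := by
  obtain ⟨n, c, u, hc, hu, e⟩ := aux_poly p hπ hf
  rw [e, ← Valuation.ne_zero_iff Valued.v, map_mul, aux_val_unit p hπ hc hu]
  simp [hπ0]

lemma aux_closure {Kv : Type*} [Field Kv] (x : Kv) :
    Subfield.closure {x} = (IntermediateField.adjoin (⊥ : Subfield Kv) {x}).toSubfield := by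
  apply le_antisymm
  · rw [Subfield.closure_le]
    exact IntermediateField.subset_adjoin _ _
  · rw [IntermediateField.adjoin_toSubfield, Subfield.closure_le]
    rintro y (⟨c, rfl⟩ | hy)
    · exact (bot_le : (⊥ : Subfield Kv) ≤ _) c.2
    · exact Subfield.subset_closure hy

lemma aux_res {Kv : Type*} [Field Kv] [Valued Kv ZM0] (p : ℕ) [Fact p.Prime] [CharP Kv p]
    {π : Kv} (hπ0 : π ≠ 0) (hπ : Valued.v π < 1) {r : Kv} (hr : r ∈ Subfield.closure {π})
    (hr1 : Valued.v r ≤ 1) : ∃ c : (⊥ : Subfield Kv), Valued.v (r - c) ≤ Valued.v π := by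
  rw [aux_closure] at hr
  obtain ⟨f, g, e⟩ := (IntermediateField.mem_adjoin_simple_iff _ _).1 hr
  by_cases hf : f = 0
  · exact ⟨0, by simp [e, hf]⟩
  by_cases hg : g = 0
  · exact ⟨0, by simp [e, hg]⟩
  obtain ⟨n, c, u, hc, hu, ef⟩ := aux_poly p hπ hf
  obtain ⟨m, d, w, hd, hw, eg⟩ := aux_poly p hπ hg
  have v1 := aux_val_unit p hπ hc hu
  have v2 := aux_val_unit p hπ hd hw
  have vπ : Valued.v π ≠ 0 := by simpa using hπ0
  have vr : Valued.v r * Valued.v π ^ m = Valued.v π ^ n := by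
    rw [e, ef, eg, map_div₀, map_mul, map_mul, v1, v2, map_pow, map_pow, mul_one, mul_one]
    exact div_mul_cancel₀ _ (pow_ne_zero _ vπ)
  have n2 : ((d : Kv) + π * w) ≠ 0 := by
    rw [← Valuation.ne_zero_iff Valued.v, v2]; exact one_ne_zero
  have hd' : (d : Kv) ≠ 0 := by simpa using hd
  rcases lt_trichotomy n m with h | h | h
  · exfalso
    have h1 : Valued.v π ^ n ≤ Valued.v π ^ m := by
      rw [← vr]; exact mul_le_of_le_one_left' hr1
    have h2 : Valued.v π ^ m < Valued.v π ^ n := pow_lt_pow_right_of_lt_one₀ (zero_lt_iff.2 vπ) hπ h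
    exact absurd h1 (not_le.2 h2)
  · subst h
    refine ⟨c / d, ?_⟩
    have : r - ((c / d : (⊥ : Subfield Kv)) : Kv) = π * ((d * u - c * w) * (d : Kv)⁻¹ * (d + π * w)⁻¹) := by
      rw [e, ef, eg]
      push_cast
      field_simp
      ring
    rw [this, map_mul]
    refine mul_le_of_le_one_right' ?_
    rw [map_mul, map_mul, map_inv₀, map_inv₀, v2, aux_bot_val p d.2 hd', inv_one, mul_one, mul_one]
    refine (Valuation.map_sub _ _ _).trans (max_le ?_ ?_) <;> rw [map_mul]
    · exact mul_le_one' (aux_bot_val_le p _) hu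
    · exact mul_le_one' (aux_bot_val_le p _) hw
  · refine ⟨0, ?_⟩
    obtain ⟨k, rfl⟩ := Nat.exists_eq_add_of_lt h
    have : Valued.v r = Valued.v π ^ (k + 1) := by
      apply mul_right_cancel₀ (pow_ne_zero m vπ)
      rw [vr, ← pow_add]; congr 1; ring
    rw [ZeroMemClass.coe_zero, sub_zero, this, pow_succ]
    exact mul_le_of_le_one_left' (pow_le_one' hπ.le _)

lemma aux_indep {Kv : Type*} [Field Kv] [Valued Kv ZM0] (p : ℕ) [Fact p.Prime] [CharP Kv p]
    {π : Kv} (hπ0 : π ≠ 0) (hπ : Valued.v π < 1) {ι : Type*} (y : ι → Kv)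
    (hy : ∀ i, Valued.v (y i) ≤ 1)
    (hind : ∀ (s : Finset ι) (c : ι → (⊥ : Subfield Kv)),
      Valued.v (∑ i ∈ s, (c i : Kv) * y i) ≤ Valued.v π → ∀ i ∈ s, c i = 0) :
    LinearIndependent (Subfield.closure {π}) y := by
  rw [linearIndependent_iff']
  intro s g hg
  by_contra! hne
  obtain ⟨i1, hi1, hne⟩ := hne
  obtain ⟨i0, hi0, hmax⟩ := s.exists_max_image (fun i => Valued.v (g i : Kv)) ⟨i1, hi1⟩
  have hg0 : (g i0 : Kv) ≠ 0 := by
    intro h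
    have := hmax i1 hi1
    rw [h, map_zero, le_zero_iff, map_eq_zero] at this
    exact hne (by simpa using this)
  have hv0 : Valued.v (g i0 : Kv) ≠ 0 := by simpa using hg0
  have : ∀ i : ι, ∃ c : (⊥ : Subfield Kv), i ∈ s → Valued.v ((g i / g i0 : Kv) - c) ≤ Valued.v π := by
    intro i
    by_cases hi : i ∈ s
    · obtain ⟨c, hc⟩ := aux_res p hπ0 hπ (div_mem (g i).2 (g i0).2) (by
        rw [map_div₀]; exact div_le_one_of_le₀ (hmax i hi) zero_le)
      exact ⟨c, fun _ => hc⟩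
    · exact ⟨0, fun h => absurd h hi⟩
  choose c hc using this
  have e : ∑ i ∈ s, (g i : Kv) * y i = 0 := hg
  have e2 : ∑ i ∈ s, (c i : Kv) * y i = - ∑ i ∈ s, ((g i / g i0 : Kv) - c i) * y i := by
    have e3 : ∑ i ∈ s, (g i / g i0 : Kv) * y i = 0 := by
      have : ∑ i ∈ s, (g i / g i0 : Kv) * y i = (g i0 : Kv)⁻¹ * ∑ i ∈ s, (g i : Kv) * y i := by
        rw [Finset.mul_sum]
        exact Finset.sum_congr rfl fun i _ => by ring
      rw [this, e, mul_zero]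
    simp_rw [sub_mul]
    rw [Finset.sum_sub_distrib, e3]; ring
  have h0 := hind s c (by
    rw [e2, Valuation.map_neg]
    refine Valuation.map_sum_le _ fun i hi => ?_
    rw [map_mul]
    exact (mul_le_of_le_one_right' (hy i)).trans (hc i hi)) i0 hi0
  have h1 := hc i0 hi0
  rw [h0, div_self hg0, ZeroMemClass.coe_zero, sub_zero, map_one] at h1
  exact absurd h1 (not_le.2 hπ)

lemma aux_alg_iff {Kv : Type*} [Field Kv] (x y : Kv) :
    IsAlgebraic (Subfield.closure {x}) y ↔
      IsAlgebraic (Algebra.adjoin (⊥ : Subfield Kv) {x}) y := by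
  rw [aux_closure]
  open scoped IntermediateField.algebraAdjoinAdjoin in
  exact (IsFractionRing.isAlgebraic_iff (Algebra.adjoin (⊥ : Subfield Kv) {x})
    (IntermediateField.adjoin (⊥ : Subfield Kv) {x}) Kv).symm

lemma aux_fin {Kv : Type*} [Field Kv] [Valued Kv ZM0] (p : ℕ) [Fact p.Prime] {K : Subfield Kv}
    (hK : IsGlobalFunctionFieldCompletion p K)
    {π : Kv} (hπ0 : π ≠ 0) (hπ : Valued.v π < 1) (hπK : π ∈ K) :
    ∃ E : Submodule (Subfield.closure {π}) Kv, Module.Finite (Subfield.closure {π}) E ∧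
      ∀ x ∈ K, x ∈ E := by
  have := hK.charP
  obtain ⟨x₀, hx₀, -, hfin⟩ := hK.globalFunctionField
  set F0 := Subfield.closure {x₀} with hF0
  have hF0K : F0 ≤ K := by
    rw [hF0, Subfield.closure_le]; simpa using hx₀
  let KA : Subalgebra F0 Kv := { K.toSubring with algebraMap_mem' := fun r => hF0K r.2 }
  have hspan : Submodule.span F0 (K : Set Kv) = Subalgebra.toSubmodule KA :=
    Submodule.span_eq (Subalgebra.toSubmodule KA)
  rw [degOver, Module.rank_lt_aleph0_iff, hspan] at hfin
  have hFG : (Subalgebra.toSubmodule KA).FG := Module.Finite.iff_fg.1 hfin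
  have halg : ∀ y ∈ K, IsAlgebraic (Algebra.adjoin (⊥ : Subfield Kv) {x₀}) y := fun y hy =>
    (aux_alg_iff _ _).1 (IsIntegral.of_mem_of_fg KA hFG y hy).isAlgebraic
  have hx : IsAlgebraic (Algebra.adjoin (⊥ : Subfield Kv) {π}) x₀ := by
    have := Matroid.closure_exchange (M := AlgebraicIndependent.matroid (⊥ : Subfield Kv) Kv)
      (e := π) (f := x₀) (X := ∅)
    simp only [AlgebraicIndependent.matroid_closure_eq, Set.mem_sdiff, SetLike.mem_coe,
      Subalgebra.mem_algebraicClosure, insert_empty_eq] at this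
    refine (this ⟨halg π hπK, ?_⟩).1
    rw [Algebra.adjoin_empty]
    intro h
    obtain ⟨f, hf, hf0⟩ := Subalgebra.isAlgebraic_of_isAlgebraic_bot h
    exact aux_trans p hπ0 hπ hf hf0
  have halg' : ∀ y ∈ K, IsIntegral (Subfield.closure {π}) y := by
    intro y hy
    rw [← isAlgebraic_iff_isIntegral, aux_alg_iff]
    refine IsAlgebraic.adjoin_of_forall_isAlgebraic ?_ (halg y hy)
    rintro _ ⟨rfl, _⟩
    exact hx
  obtain ⟨S, hS⟩ := hFG
  have hSK : ∀ y ∈ S, y ∈ K := fun y hy => by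
    have : y ∈ Subalgebra.toSubmodule KA := hS ▸ Submodule.subset_span hy
    exact this
  let E := IntermediateField.adjoin (Subfield.closure {π}) (insert x₀ (S : Set Kv))
  have hfd : FiniteDimensional (Subfield.closure {π}) E := by
    have : Finite ↥(insert x₀ (S : Set Kv)) := (S.finite_toSet.insert x₀).to_subtype
    apply IntermediateField.finiteDimensional_adjoin
    rintro y (rfl | hy)
    · exact halg' _ hx₀
    · exact halg' _ (hSK _ hy)
  refine ⟨Subalgebra.toSubmodule E.toSubalgebra, hfd, fun x hxK => ?_⟩
  have hx1 : x ∈ Submodule.span F0 (S : Set Kv) := by rw [hS]; exact hxK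
  have hF0E : F0 ≤ E.toSubfield := by
    rw [hF0, Subfield.closure_le, Set.singleton_subset_iff]
    exact IntermediateField.subset_adjoin _ _ (Set.mem_insert _ _)
  show x ∈ E
  induction hx1 using Submodule.span_induction with
  | mem x h => exact IntermediateField.subset_adjoin _ _ (Set.mem_insert_of_mem _ h)
  | zero => exact zero_mem _
  | add x y h1' h2' h1 h2 =>
    have m1 : x ∈ K := by rw [hS] at h1'; exact h1'
    have m2 : y ∈ K := by rw [hS] at h2'; exact h2'
    exact add_mem (h1 m1) (h2 m2)
  | smul a x h' h =>
    have m1 : x ∈ K := by rw [hS] at h'; exact h'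
    exact mul_mem (hF0E a.2) (h m1)

lemma aux_finite {Kv : Type*} [Field Kv] [Valued Kv ZM0] (p : ℕ) [Fact p.Prime] {K : Subfield Kv}
    (hK : IsGlobalFunctionFieldCompletion p K)
    {π : Kv} (hπ0 : π ≠ 0) (hπ : Valued.v π < 1) {Γ : Set Kv} (hΓ : IsCompleteSetOfReps π Γ)
    (hπK : π ∈ K) (hΓK : Γ ⊆ (K : Set Kv)) : Γ.Finite := by
  have := hK.charP
  obtain ⟨E, hE, hKE⟩ := aux_fin p hK hπ0 hπ hπK
  let P : Submodule (⊥ : Subfield Kv) Kv :=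
    { carrier := {x | Valued.v x ≤ Valued.v π}
      zero_mem' := by simp
      add_mem' := fun {x y} (h1 : Valued.v x ≤ Valued.v π) (h2 : Valued.v y ≤ Valued.v π) =>
        show Valued.v (x + y) ≤ Valued.v π from (Valuation.map_add _ _ _).trans (max_le h1 h2)
      smul_mem' := by
        intro c x h
        show Valued.v ((c : Kv) * x) ≤ _
        rw [map_mul]
        exact (mul_le_of_le_one_left' (aux_bot_val_le p c)).trans h }
  let q : Γ → Kv ⧸ P := fun γ => P.mkQ (γ : Kv)
  obtain ⟨κ, a, ha, hspan, hli⟩ := exists_linearIndependent' (⊥ : Subfield Kv) q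
  have hli2 : LinearIndependent (Subfield.closure {π}) (fun i : κ => ((a i : Γ) : Kv)) := by
    refine aux_indep p hπ0 hπ _ (fun i => hΓ.1 _ (a i).2) ?_
    intro s c hc
    rw [linearIndependent_iff'] at hli
    refine hli s c ?_
    have : ∑ i ∈ s, c i • (q ∘ a) i = P.mkQ (∑ i ∈ s, (c i : Kv) * (a i : Γ)) := by
      rw [map_sum]
      refine Finset.sum_congr rfl fun i _ => ?_
      exact (map_smul P.mkQ (c i) ((a i : Γ) : Kv)).symm
    rw [this, Submodule.mkQ_apply, Submodule.Quotient.mk_eq_zero]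
    exact hc
  have hli3 : LinearIndependent (Subfield.closure {π})
      (fun i : κ => (⟨((a i : Γ) : Kv), hKE _ (hΓK (a i).2)⟩ : E)) :=
    LinearIndependent.of_comp E.subtype hli2
  have hκ : Finite κ := hli3.finite
  have := aux_bot_finite (Kv := Kv) p
  have hfm : Module.Finite (⊥ : Subfield Kv) (Submodule.span (⊥ : Subfield Kv) (Set.range q)) := by
    rw [← hspan]
    exact Module.Finite.span_of_finite _ (Set.finite_range _)
  have hfs : Finite (Submodule.span (⊥ : Subfield Kv) (Set.range q)) :=
    Module.finite_of_finite (⊥ : Subfield Kv)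
  have hinj : Function.Injective (fun γ : Γ =>
      (⟨q γ, Submodule.subset_span ⟨γ, rfl⟩⟩ : Submodule.span (⊥ : Subfield Kv) (Set.range q))) := by
    intro γ γ' h
    have h1 : q γ = q γ' := congrArg Subtype.val h
    have h2 : (γ : Kv) - γ' ∈ P := (Submodule.Quotient.eq P).1 h1
    have hu := hΓ.2 γ (hΓ.1 _ γ.2)
    exact Subtype.ext (hu.unique ⟨γ.2, by simp⟩ ⟨γ'.2, h2⟩)
  exact Set.finite_coe_iff.1 (Finite.of_injective _ hinj)
end helpers

/-- **Lemma 2.1.** Suppose `π ∈ A` and `Γ ⊆ A` (all rational, i.e. in `K`).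
If `[K : 𝔽_q(π)] > [K_v : 𝔽_q((π))]`, then `(Γ, π)` cannot have property A. -/
theorem not_propertyA_of_degree_gt
    {Kv : Type*} [Field Kv] [Valued Kv ZM0]
    (p : ℕ) [Fact p.Prime] (K : Subfield Kv)
    (hK : IsGlobalFunctionFieldCompletion p K)
    (π : Kv) (hπ0 : π ≠ 0) (hπ : Valued.v π < 1)
    (Γ : Set Kv) (hΓ : IsCompleteSetOfReps π Γ)
    (hπK : π ∈ K) (hΓK : Γ ⊆ (K : Set Kv))
    (hdeg : Module.rank ↥(FqPiCompletion p K π) Kv <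
      degOver (FqPi p K π) (K : Set Kv)) :
    ¬ HasPropertyA K π Γ := by
  intro hA
  have hFK : FqPi p K π ≤ K := by
    rw [FqPi, Subfield.closure_le]
    rintro x (hx | rfl)
    · exact hx.1
    · exact hπK
  have hF : π ∈ FqPi p K π := Subfield.subset_closure (Or.inr rfl)
  exact absurd (aux_main hπ0 hπ hΓ (aux_finite p hK hπ0 hπ hΓ hπK hΓK) hπK hΓK hA hF hFK)
    (not_le.2 hdeg)
end

section
/- Suppose π ∈ A and [K : 𝔽_q(π)] = [K_v : 𝔽_q((π))]. Let α₁, …, α_{ef} ∈ A be elements whose reductions modulo πA are linearly independent over 𝔽_q (here e = v(π), f is the residue degree, and dim_{𝔽_q} A/πA = ef), and let Γ = 𝔽_q·α₁ + ⋯ + 𝔽_q·α_{ef} = {c₁α₁ + ⋯ + c_{ef}α_{ef} : cᵢ ∈ 𝔽_q}. Then Γ is a complete set of representatives of A_v/πA_v and (Γ, π) has property A. -/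
/-!
Common setup: `Kv` is a complete field equipped with a (normalized, `ℤ`-valued)
valuation `Valued.v : Kv → ℤₘ₀ = WithZero (Multiplicative ℤ)`, and `K` is a dense
subfield of `Kv` (so that `Kv` is the completion `K_v` of `K`).  The valuation is
written multiplicatively: the additive valuation of `x` is `n` iff
`Valued.v x = ofAdd (-n)`; the valuation ring `A_v` is `{x | Valued.v x ≤ 1}` and
`π A_v = {x | Valued.v x ≤ Valued.v π}`.
-/

open scoped Multiplicative

variable {Kv : Type*} [Field Kv] [Valued Kv ZM0]

open Filter Topology Polynomial

section helpers

set_option linter.unusedSectionVars false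

theorem hasSum_of_eq {f g : ℕ → Kv} {x : Kv} (h : HasSum g x) (e : ∀ n, f n = g n) :
    HasSum f x := by
  rw [show f = g from funext e]; exact h

theorem ball_mem (x r : Kv) (hr : r ≠ 0) :
    {y : Kv | Valued.v (y - x) ≤ Valued.v r} ∈ 𝓝 x := by
  rw [Valued.mem_nhds]
  have h' : (Valued.v : Valuation Kv ZM0).restrict r ≠ 0 := by simp [hr]
  refine ⟨Units.mk0 _ h', ?_⟩
  intro y y_in
  exact (Valuation.restrict_lt_iff _ |>.mp y_in).le

theorem exists_pow_ball (π : Kv) (hπ : Valued.v π < 1) (U : Set Kv) (hU : U ∈ 𝓝 (0 : Kv)) :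
    ∃ N : ℕ, ∀ y : Kv, Valued.v y ≤ Valued.v (π ^ N) → y ∈ U := by
  obtain ⟨γ, hγ⟩ := Valued.mem_nhds_zero.1 hU
  have := Valued.tendsto_zero_pow_of_v_lt_one hπ
  have h2 := ((Valued.hasBasis_nhds_zero Kv ZM0).tendsto_right_iff.1 this) γ trivial
  obtain ⟨N, hN⟩ := h2.exists
  refine ⟨N, fun y hy => hγ ?_⟩
  exact lt_of_le_of_lt ((Valuation.restrict_le_iff _).2 hy) hN

theorem tendsto_of_le_pow (π : Kv) (hπ : Valued.v π < 1) (f : ℕ → Kv)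
    (hf : ∀ n, Valued.v (f n) ≤ Valued.v (π ^ n)) : Tendsto f atTop (𝓝 0) := by
  intro U hU
  obtain ⟨N, hN⟩ := exists_pow_ball π hπ U hU
  refine mem_map.2 (mem_atTop_sets.2 ⟨N, fun n hn => hN _ ((hf n).trans ?_)⟩)
  rw [map_pow, map_pow]
  exact pow_le_pow_right_of_le_one' hπ.le hn

theorem nonarch (π : Kv) (hπ0 : π ≠ 0) (hπ : Valued.v π < 1) : NonarchimedeanAddGroup Kv where
  is_nonarchimedean := by
    intro U hU
    obtain ⟨N, hN⟩ := exists_pow_ball π hπ U hU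
    let V : AddSubgroup Kv :=
      { carrier := {y | Valued.v y ≤ Valued.v (π ^ N)}
        zero_mem' := by simp
        add_mem' := fun {a b} ha hb =>
          show Valued.v (a + b) ≤ Valued.v (π ^ N) from Valuation.map_add_le _ ha hb
        neg_mem' := fun {a} ha => by simpa [Valuation.map_neg] using ha }
    have hV : (V : Set Kv) ∈ 𝓝 (0 : Kv) := by
      have := ball_mem (0 : Kv) (π ^ N) (pow_ne_zero _ hπ0)
      simpa [V] using this
    exact ⟨⟨V, V.isOpen_of_mem_nhds hV⟩, fun y hy => hN y hy⟩

theorem summable_of_le [CompleteSpace Kv] (π : Kv) (hπ0 : π ≠ 0) (hπ : Valued.v π < 1)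
    (c : ℕ → Kv) (hc : ∀ n, Valued.v (c n) ≤ 1) : Summable (fun n => c n * π ^ n) := by
  have := nonarch π hπ0 hπ
  apply NonarchimedeanAddGroup.summable_of_tendsto_cofinite_zero
  rw [Nat.cofinite_eq_atTop]
  apply tendsto_of_le_pow π hπ
  intro n
  rw [map_mul]
  exact mul_le_of_le_one_left' (hc n)

theorem hasSum_v_le (r : Kv) (hr : r ≠ 0) (f : ℕ → Kv) (x : Kv) (h : HasSum f x)
    (hf : ∀ n, Valued.v (f n) ≤ Valued.v r) : Valued.v x ≤ Valued.v r := by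
  have h1 := h (ball_mem x r hr)
  obtain ⟨t, ht⟩ := (Filter.Eventually.exists (f := atTop) h1 : ∃ t, _)
  have h2 : Valued.v (∑ i ∈ t, f i) ≤ Valued.v r := Valuation.map_sum_le _ (fun i _ => hf i)
  have : x = ∑ i ∈ t, f i - (∑ i ∈ t, f i - x) := by ring
  rw [this]
  exact Valuation.map_sub_le _ h2 ht

theorem const_pow_mul (p : ℕ) (x : Kv) (n : ℕ) (h : x ^ p ^ n = x) (m : ℕ) :
    x ^ p ^ (n * m) = x := by
  induction m with
  | zero => simp
  | succ m ih => rw [Nat.mul_succ, pow_add, pow_mul, ih, h]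

def frobFix (p : ℕ) [Fact p.Prime] [CharP Kv p] (n : ℕ) : Subfield Kv :=
  RingHom.eqLocusField (iterateFrobenius Kv p n) (RingHom.id Kv)

theorem mem_frobFix (p : ℕ) [Fact p.Prime] [CharP Kv p] (n : ℕ) (x : Kv) :
    x ∈ frobFix p n ↔ x ^ p ^ n = x := by
  unfold frobFix
  rw [RingHom.mem_eqLocusField, iterateFrobenius_def]; rfl

theorem finite_frobFix (p : ℕ) [Fact p.Prime] [CharP Kv p] (n : ℕ) (hn : 0 < n) :
    ((frobFix p n : Subfield Kv) : Set Kv).Finite := by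
  have h1 : 1 < p ^ n := Nat.one_lt_pow hn.ne' (Fact.out : p.Prime).one_lt
  have hne : (X ^ p ^ n - X : Kv[X]) ≠ 0 := FiniteField.X_pow_card_sub_X_ne_zero _ h1
  refine (Polynomial.rootSet_finite (X ^ p ^ n - X : Kv[X]) Kv).subset ?_
  intro x hx
  rw [Polynomial.mem_rootSet]
  refine ⟨hne, ?_⟩
  have := (mem_frobFix p n x).1 hx
  simp [this]

theorem mem_frobFix_mul (p : ℕ) [Fact p.Prime] [CharP Kv p] (n m : ℕ) (x : Kv)
    (h : x ∈ frobFix p n) : x ∈ frobFix p (n * m) := by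
  rw [mem_frobFix] at *
  exact const_pow_mul p x n h m

def cField (p : ℕ) [Fact p.Prime] [CharP Kv p] (K : Subfield Kv) : Subfield Kv where
  carrier := ConstantField p K
  zero_mem' := ⟨K.zero_mem, 1, one_pos, by
    have := (Fact.out : p.Prime).ne_zero
    simp [this]⟩
  one_mem' := ⟨K.one_mem, 1, one_pos, by simp⟩
  add_mem' := by
    rintro a b ⟨ha, n, hn, hna⟩ ⟨hb, m, hm, hmb⟩
    refine ⟨K.add_mem ha hb, n * m, Nat.mul_pos hn hm, ?_⟩
    rw [← mem_frobFix] at *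
    refine Subfield.add_mem _ (mem_frobFix_mul p n m a hna) ?_
    rw [mul_comm]; exact mem_frobFix_mul p m n b hmb
  mul_mem' := by
    rintro a b ⟨ha, n, hn, hna⟩ ⟨hb, m, hm, hmb⟩
    refine ⟨K.mul_mem ha hb, n * m, Nat.mul_pos hn hm, ?_⟩
    rw [← mem_frobFix] at *
    refine Subfield.mul_mem _ (mem_frobFix_mul p n m a hna) ?_
    rw [mul_comm]; exact mem_frobFix_mul p m n b hmb
  neg_mem' := by
    rintro a ⟨ha, n, hn, hna⟩
    refine ⟨K.neg_mem ha, n, hn, ?_⟩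
    rw [← mem_frobFix] at *
    exact Subfield.neg_mem _ hna
  inv_mem' := by
    rintro a ⟨ha, n, hn, hna⟩
    refine ⟨K.inv_mem ha, n, hn, ?_⟩
    rw [← mem_frobFix] at *
    exact Subfield.inv_mem _ hna

theorem mem_cField (p : ℕ) [Fact p.Prime] [CharP Kv p] (K : Subfield Kv) (x : Kv) :
    x ∈ cField p K ↔ x ∈ ConstantField p K := Iff.rfl

theorem v_const (p : ℕ) [Fact p.Prime] (K : Subfield Kv) (x : Kv)
    (hx : x ∈ ConstantField p K) (h0 : x ≠ 0) : Valued.v x = 1 := by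
  obtain ⟨-, n, hn, h⟩ := hx
  have h1 : 1 < p ^ n := Nat.one_lt_pow hn.ne' (Fact.out : p.Prime).one_lt
  have h2 : x ^ (p ^ n - 1) = 1 := by
    have : x ^ (p ^ n - 1) * x = 1 * x := by
      rw [← pow_succ, Nat.sub_add_cancel h1.le, h, one_mul]
    exact mul_right_cancel₀ h0 this
  have h3 : (Valued.v x : ZM0) ^ (p ^ n - 1) = 1 := by rw [← map_pow, h2, map_one]
  exact (pow_eq_one_iff.1 h3).resolve_right (by omega)

theorem v_const_le (p : ℕ) [Fact p.Prime] (K : Subfield Kv) (x : Kv)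
    (hx : x ∈ ConstantField p K) : Valued.v x ≤ 1 := by
  by_cases h : x = 0
  · simp [h]
  · exact (v_const p K x hx h).le

theorem const_eq_zero (p : ℕ) [Fact p.Prime] (K : Subfield Kv) (x : Kv)
    (hx : x ∈ ConstantField p K) (h : Valued.v x < 1) : x = 0 := by
  by_contra h0
  exact h.ne (v_const p K x hx h0)

variable (p : ℕ) [Fact p.Prime] [CharP Kv p] (K : Subfield Kv) (π : Kv)

theorem v_aeval_le (hπ : Valued.v π < 1) (P : (cField p K)[X]) :
    Valued.v (aeval π P) ≤ 1 := by
  rw [aeval_eq_sum_range]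
  apply Valuation.map_sum_le
  intro i _
  rw [Algebra.smul_def, map_mul, map_pow]
  exact mul_le_one' (v_const_le p K _ (P.coeff i).2) (pow_le_one' hπ.le _)

theorem aeval_divX (P : (cField p K)[X]) :
    aeval π P = aeval π P.divX * π + (P.coeff 0 : Kv) := by
  conv_lhs => rw [← Polynomial.divX_mul_X_add P]
  simp
  rfl

theorem v_aeval_sub (hπ : Valued.v π < 1) (P : (cField p K)[X]) :
    Valued.v (aeval π P - (P.coeff 0 : Kv)) ≤ Valued.v π := by
  rw [aeval_divX, add_sub_cancel_right, map_mul]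
  exact mul_le_of_le_one_left' (v_aeval_le p K π hπ _)

theorem v_aeval_eq (hπ : Valued.v π < 1) (P : (cField p K)[X]) (h : P.coeff 0 ≠ 0) :
    Valued.v (aeval π P) = 1 := by
  have h1 : Valued.v (P.coeff 0 : Kv) = 1 := v_const p K _ (P.coeff 0).2 (by simpa using h)
  rw [← h1]
  apply Valuation.map_eq_of_sub_lt
  rw [h1]
  exact (v_aeval_sub p K π hπ P).trans_lt hπ

theorem poly_factor (P : (cField p K)[X]) (hP : P ≠ 0) :
    ∃ (n : ℕ) (Q : (cField p K)[X]), Q.coeff 0 ≠ 0 ∧ P = X ^ n * Q := by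
  obtain ⟨Q, h1, h2⟩ := Polynomial.exists_eq_pow_rootMultiplicity_mul_and_not_dvd P hP 0
  rw [C_0, sub_zero] at h1 h2
  exact ⟨_, Q, fun h => h2 (X_dvd_iff.2 h), h1⟩

theorem mem_FqPi (z : Kv) (hz : z ∈ FqPi p K π) :
    ∃ P Q : (cField p K)[X], z = (aeval π P : Kv) / (aeval π Q : Kv) := by
  rw [← IntermediateField.mem_adjoin_simple_iff]
  have : FqPi p K π ≤ (IntermediateField.adjoin (cField p K) {π}).toSubfield := by
    unfold FqPi
    rw [Subfield.closure_le]
    rintro y (hy | hy)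
    · exact (IntermediateField.adjoin (cField p K) {π}).algebraMap_mem ⟨y, hy⟩
    · rw [Set.mem_singleton_iff.1 hy]
      exact IntermediateField.mem_adjoin_simple_self _ _
  exact this hz

theorem aeval_mem_FqPi (P : (cField p K)[X]) : aeval π P ∈ FqPi p K π := by
  rw [aeval_eq_sum_range]
  apply Subfield.sum_mem
  intro i _
  rw [Algebra.smul_def]
  refine mul_mem (Subfield.subset_closure (Or.inl (P.coeff i).2)) ?_
  exact pow_mem (show π ∈ FqPi p K π from Subfield.subset_closure (Or.inr rfl)) _

theorem FqPi_form (hπ0 : π ≠ 0) (z : Kv) (hz : z ∈ FqPi p K π) (h0 : z ≠ 0) :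
    ∃ (n : ℤ) (P Q : (cField p K)[X]), P.coeff 0 ≠ 0 ∧ Q.coeff 0 ≠ 0 ∧
      z = π ^ n * (aeval π P / aeval π Q) := by
  obtain ⟨P, Q, rfl⟩ := mem_FqPi p K π z hz
  have hP : P ≠ 0 := by rintro rfl; simp at h0
  have hQ : Q ≠ 0 := by rintro rfl; simp at h0
  obtain ⟨a, P', hP', rfl⟩ := poly_factor p K P hP
  obtain ⟨b, Q', hQ', rfl⟩ := poly_factor p K Q hQ
  refine ⟨(a : ℤ) - b, P', Q', hP', hQ', ?_⟩
  rw [zpow_sub₀ hπ0]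
  simp only [map_mul, map_pow, aeval_X, zpow_natCast]
  rw [mul_div_mul_comm]

theorem FqPi_val (hπ0 : π ≠ 0) (hπ : Valued.v π < 1) (z : Kv) (hz : z ∈ FqPi p K π) (h0 : z ≠ 0) :
    ∃ n : ℤ, Valued.v z = Valued.v (π ^ n) := by
  obtain ⟨n, P, Q, hP, hQ, rfl⟩ := FqPi_form p K π hπ0 z hz h0
  refine ⟨n, ?_⟩
  rw [map_mul, map_div₀, v_aeval_eq p K π hπ P hP, v_aeval_eq p K π hπ Q hQ]
  simp

theorem FqPi_int (hπ0 : π ≠ 0) (hπ : Valued.v π < 1) (z : Kv) (hz : z ∈ FqPi p K π)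
    (h1 : Valued.v z ≤ 1) :
    ∃ P Q : (cField p K)[X], Q.coeff 0 ≠ 0 ∧ z * aeval π Q = aeval π P := by
  by_cases h0 : z = 0
  · exact ⟨0, 1, by simp, by simp [h0]⟩
  obtain ⟨n, P, Q, hP, hQ, rfl⟩ := FqPi_form p K π hπ0 z hz h0
  have hQ1 := v_aeval_eq p K π hπ Q hQ
  have hQ0 : aeval π Q ≠ 0 := by
    intro h; rw [h] at hQ1; simp at hQ1
  have hn : 0 ≤ n := by
    by_contra hn
    push Not at hn
    rw [map_mul, map_div₀, v_aeval_eq p K π hπ P hP, hQ1, div_one, mul_one, map_zpow₀] at h1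
    obtain ⟨k, rfl⟩ : ∃ k : ℕ, n = -((k + 1 : ℕ) : ℤ) := ⟨(-n - 1).toNat, by omega⟩
    rw [zpow_neg, zpow_natCast] at h1
    have hpos : (0 : ZM0) < Valued.v π := by simpa [zero_lt_iff] using hπ0
    have := pow_lt_one₀ hpos.le hπ (Nat.succ_ne_zero k)
    exact absurd h1 (not_le.2 ((one_lt_inv₀ (pow_pos hpos _)).2 this))
  obtain ⟨k, rfl⟩ := Int.eq_ofNat_of_zero_le hn
  refine ⟨X ^ k * P, Q, hQ, ?_⟩
  simp only [map_mul, map_pow, aeval_X, zpow_natCast]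
  field_simp

theorem FqPi_red (hπ0 : π ≠ 0) (hπ : Valued.v π < 1) (z : Kv) (hz : z ∈ FqPi p K π)
    (h1 : Valued.v z ≤ 1) :
    ∃ c ∈ ConstantField p K, Valued.v (z - c) ≤ Valued.v π := by
  obtain ⟨P, Q, hQ, h⟩ := FqPi_int p K π hπ0 hπ z hz h1
  have hQ1 := v_aeval_eq p K π hπ Q hQ
  refine ⟨(P.coeff 0 : Kv) / (Q.coeff 0 : Kv), (cField p K).div_mem (P.coeff 0).2 (Q.coeff 0).2, ?_⟩
  have hq0 : (Q.coeff 0 : Kv) ≠ 0 := by simpa using hQ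
  have hq1 := v_const p K _ (Q.coeff 0).2 hq0
  have e : z - (P.coeff 0 : Kv) / (Q.coeff 0 : Kv) =
      ((aeval π P - P.coeff 0) - z * (aeval π Q - Q.coeff 0)) / Q.coeff 0 := by
    rw [← h]; field_simp; ring
  rw [e, map_div₀, hq1, div_one]
  apply Valuation.map_sub_le _ (v_aeval_sub p K π hπ P)
  rw [map_mul]
  exact (mul_le_of_le_one_left' h1).trans (v_aeval_sub p K π hπ Q)

theorem approx_closure (z r : Kv) (hr : r ≠ 0) (hz : z ∈ FqPiCompletion p K π) :
    ∃ w ∈ FqPi p K π, Valued.v (w - z) ≤ Valued.v r := by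
  have hz' : z ∈ closure (FqPi p K π : Set Kv) := hz
  obtain ⟨w, hw, hw'⟩ := mem_closure_iff_nhds.1 hz' _ (ball_mem z r hr)
  exact ⟨w, hw', hw⟩

theorem Fhat_val (hπ0 : π ≠ 0) (hπ : Valued.v π < 1) (z : Kv) (hz : z ∈ FqPiCompletion p K π)
    (h0 : z ≠ 0) : ∃ n : ℤ, Valued.v z = Valued.v (π ^ n) := by
  obtain ⟨w, hw, h⟩ := approx_closure p K π z (z * π) (mul_ne_zero h0 hπ0) hz
  have hlt : Valued.v (z * π) < Valued.v z := by
    rw [map_mul]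
    have hpos : (0 : ZM0) < Valued.v z := by simpa [zero_lt_iff] using h0
    exact mul_lt_of_lt_one_right hpos hπ
  have e : Valued.v w = Valued.v z := Valuation.map_eq_of_sub_lt _ (h.trans_lt hlt)
  rw [← e]
  apply FqPi_val p K π hπ0 hπ w hw
  rintro rfl
  rw [map_zero] at e
  exact h0 ((map_eq_zero _).1 e.symm)

theorem Fhat_red (hπ0 : π ≠ 0) (hπ : Valued.v π < 1) (z : Kv) (hz : z ∈ FqPiCompletion p K π)
    (h1 : Valued.v z ≤ 1) :
    ∃ c ∈ ConstantField p K, Valued.v (z - c) ≤ Valued.v π := by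
  obtain ⟨w, hw, h⟩ := approx_closure p K π z π hπ0 hz
  have hw1 : Valued.v w ≤ 1 := by
    have : w = (w - z) + z := by ring
    rw [this]
    exact Valuation.map_add_le _ (h.trans hπ.le) h1
  obtain ⟨c, hc, hc'⟩ := FqPi_red p K π hπ0 hπ w hw hw1
  refine ⟨c, hc, ?_⟩
  have : z - c = (w - c) - (w - z) := by ring
  rw [this]
  exact Valuation.map_sub_le _ hc' h

theorem indep_Fhat (hπ0 : π ≠ 0) (hπ : Valued.v π < 1)
    (s : ℕ) (α : Fin s → Kv) (hα : ∀ i, Valued.v (α i) ≤ 1)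
    (hindep : ∀ c : Fin s → Kv, (∀ i, c i ∈ ConstantField p K) →
      Valued.v (∑ i, c i * α i) ≤ Valued.v π → ∀ i, c i = 0)
    (z : Fin s → Kv) (hz : ∀ i, z i ∈ FqPiCompletion p K π) (h : ∑ i, z i * α i = 0) :
    ∀ i, z i = 0 := by
  by_contra hne
  push Not at hne
  obtain ⟨j, hj⟩ := hne
  obtain ⟨i, -, hi⟩ := Finset.exists_max_image Finset.univ
    (fun i => (Valued.v (z i) : ZM0)) ⟨j, Finset.mem_univ j⟩
  have hi0 : z i ≠ 0 := by
    intro h0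
    have := hi j (Finset.mem_univ j)
    rw [h0] at this
    simp at this
    exact hj this
  obtain ⟨n, hn⟩ := Fhat_val p K π hπ0 hπ (z i) (hz i) hi0
  have hpn : π ^ n ≠ 0 := zpow_ne_zero _ hπ0
  have hvn : (0 : ZM0) < Valued.v (π ^ n) := zero_lt_iff.2 ((Valuation.ne_zero_iff _).2 hpn)
  have hπF : π ∈ FqPiCompletion p K π :=
    Subfield.le_topologicalClosure _ (Subfield.subset_closure (Or.inr rfl))
  have hu : ∀ l, Valued.v (z l / π ^ n) ≤ 1 := by
    intro l
    rw [map_div₀, ← hn]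
    apply div_le_one_of_le₀ (hi l (Finset.mem_univ l)) zero_le
  have huF : ∀ l, z l / π ^ n ∈ FqPiCompletion p K π := fun l =>
    Subfield.div_mem _ (hz l) (Subfield.zpow_mem _ hπF _)
  choose c hc hc' using fun l => Fhat_red p K π hπ0 hπ _ (huF l) (hu l)
  have hs : ∑ l, c l * α l = - ∑ l, (z l / π ^ n - c l) * α l := by
    have : ∑ l, z l / π ^ n * α l = 0 := by
      have : ∑ l, z l / π ^ n * α l = (∑ l, z l * α l) / π ^ n := by
        rw [Finset.sum_div]; exact Finset.sum_congr rfl fun l _ => by ring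
      rw [this, h, zero_div]
    simp only [sub_mul, Finset.sum_sub_distrib, this]
    ring
  have hc0 := hindep c hc (by
    rw [hs, Valuation.map_neg]
    apply Valuation.map_sum_le
    intro l _
    rw [map_mul]
    exact (mul_le_of_le_one_right' (hα l)).trans (hc' l))
  have := hc' i
  rw [hc0 i, sub_zero, map_div₀, hn, div_self hvn.ne'] at this
  exact absurd hπ (not_lt.2 this)

theorem exists_M (S : Finset (cField p K)) :
    ∃ M : ℕ, 0 < M ∧ ∀ x ∈ S, (x : Kv) ∈ (frobFix p M : Subfield Kv) := by
  classical
  induction S using Finset.induction_on with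
  | empty => exact ⟨1, one_pos, by simp⟩
  | insert a S _ ih =>
    obtain ⟨M, hM, h⟩ := ih
    obtain ⟨-, n, hn, hna⟩ := a.2
    refine ⟨M * n, Nat.mul_pos hM hn, ?_⟩
    intro x hx
    rcases Finset.mem_insert.1 hx with rfl | hx
    · rw [mul_comm]; exact mem_frobFix_mul p n M _ ((mem_frobFix p n _).2 hna)
    · exact mem_frobFix_mul p M n _ (h x hx)

def polySet (d M : ℕ) : Set (cField p K)[X] :=
  {R | R.natDegree ≤ d ∧ ∀ j, (R.coeff j : Kv) ∈ (frobFix p M : Subfield Kv)}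

theorem polySet_finite (d M : ℕ) (hM : 0 < M) : (polySet p K d M).Finite := by
  have h := Set.Finite.pi' (ι := Fin (d + 1)) (fun _ => finite_frobFix (Kv := Kv) p M hM)
  refine Set.Finite.of_injOn (f := fun R (j : Fin (d + 1)) => (R.coeff j : Kv)) ?_ ?_ h
  · intro R hR j
    exact hR.2 j
  · intro R hR R' hR' h
    ext j
    by_cases hj : j < d + 1
    · exact congrFun h ⟨j, hj⟩
    · rw [coeff_eq_zero_of_natDegree_lt (by have := hR.1; omega),
        coeff_eq_zero_of_natDegree_lt (by have := hR'.1; omega)]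

noncomputable def stepΦ (Q R : (cField p K)[X]) : (cField p K)[X] :=
  divX (R - C (R.coeff 0 / Q.coeff 0) * Q)

theorem stepΦ_mem (d M : ℕ) (Q R : (cField p K)[X]) (hQ : Q ∈ polySet p K d M)
    (hR : R ∈ polySet p K d M) : stepΦ p K Q R ∈ polySet p K d M := by
  constructor
  · unfold stepΦ
    rw [natDegree_divX_eq_natDegree_tsub_one]
    refine (Nat.sub_le _ _).trans ?_
    refine (natDegree_sub_le _ _).trans (max_le hR.1 ?_)
    exact (natDegree_C_mul_le _ _).trans hQ.1
  · intro j
    unfold stepΦ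
    rw [coeff_divX, coeff_sub, coeff_C_mul]
    push_cast
    exact sub_mem (hR.2 _) (mul_mem (div_mem (hR.2 _) (hQ.2 _)) (hQ.2 _))

def Good (Q : (cField p K)[X]) (c : ℕ → Kv) (R : (cField p K)[X]) : Prop :=
  (∀ n, c n ∈ ConstantField p K) ∧
    ∃ z, HasSum (fun n => c n * π ^ n) z ∧ z * aeval π Q = aeval π R

theorem Good_step (hπ0 : π ≠ 0) (hπ : Valued.v π < 1) (Q R : (cField p K)[X]) (c : ℕ → Kv)
    (hQ : Q.coeff 0 ≠ 0) (h : Good p K π Q c R) :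
    c 0 = ((R.coeff 0 / Q.coeff 0 : cField p K) : Kv) ∧
      Good p K π Q (fun n => c (n + 1)) (stepΦ p K Q R) := by
  obtain ⟨hc, z, hz, hzQ⟩ := h
  have h1 : HasSum (fun n => c (n + 1) * π ^ n) ((z - c 0) * π⁻¹) := by
    have := ((hasSum_nat_add_iff' 1).2 hz).mul_right π⁻¹
    simp only [Finset.range_one, Finset.sum_singleton, pow_zero, mul_one] at this
    refine hasSum_of_eq this fun n => ?_
    rw [pow_succ]; field_simp
  set z' := (z - c 0) * π⁻¹ with hz'
  have hzz : z = z' * π + c 0 := by rw [hz']; field_simp; ring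
  have hv : Valued.v z' ≤ 1 := by
    have := hasSum_v_le (1 : Kv) one_ne_zero _ _ h1 (by
      intro n
      rw [map_one, map_mul, map_pow]
      exact mul_le_one' (v_const_le p K _ (hc _)) (pow_le_one' hπ.le _))
    simpa using this
  let c0 : cField p K := ⟨c 0, hc 0⟩
  let R' := R - C c0 * Q
  have hR' : aeval π R' = z' * aeval π Q * π := by
    have : aeval π R' = aeval π R - c 0 * aeval π Q := by
      simp only [R', map_sub, map_mul, aeval_C]; rfl
    rw [this, ← hzQ, hzz]; ring
  have hR0 : R'.coeff 0 = 0 := by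
    have h2 : Valued.v (aeval π R') ≤ Valued.v π := by
      rw [hR', map_mul, map_mul]
      exact mul_le_of_le_one_left' (mul_le_one' hv (v_aeval_le p K π hπ Q))
    have h3 : Valued.v (R'.coeff 0 : Kv) ≤ Valued.v π := by
      have : (R'.coeff 0 : Kv) = aeval π R' - (aeval π R' - R'.coeff 0) := by ring
      rw [this]
      exact Valuation.map_sub_le _ h2 (v_aeval_sub p K π hπ R')
    have := const_eq_zero p K _ (R'.coeff 0).2 (h3.trans_lt hπ)
    exact_mod_cast this
  have hc0 : c0 = R.coeff 0 / Q.coeff 0 := by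
    rw [eq_div_iff hQ]
    simp only [R', coeff_sub, coeff_C_mul] at hR0
    exact (sub_eq_zero.1 hR0).symm
  refine ⟨congrArg Subtype.val hc0, fun n => hc _, z', h1, ?_⟩
  have h4 := aeval_divX p K π R'
  rw [hR0, hR'] at h4
  have h5 : z' * aeval π Q = aeval π R'.divX := by
    apply mul_right_cancel₀ hπ0
    rw [h4]; simp
  rw [h5]
  unfold stepΦ
  rw [← hc0]

theorem finite_shifts (hπ0 : π ≠ 0) (hπ : Valued.v π < 1) (c : ℕ → Kv)
    (hc : ∀ n, c n ∈ ConstantField p K) (x : Kv) (hx : HasSum (fun n => c n * π ^ n) x)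
    (hxF : x ∈ FqPi p K π) : (Set.range fun N : ℕ => fun n : ℕ => c (n + N)).Finite := by
  classical
  have hv : Valued.v x ≤ 1 := by
    have := hasSum_v_le (1 : Kv) one_ne_zero _ _ hx (by
      intro n
      rw [map_one, map_mul, map_pow]
      exact mul_le_one' (v_const_le p K _ (hc _)) (pow_le_one' hπ.le _))
    simpa using this
  obtain ⟨P, Q, hQ, hPQ⟩ := FqPi_int p K π hπ0 hπ x hxF hv
  obtain ⟨M, hM, hMc⟩ := exists_M p K (P.coeffs ∪ Q.coeffs)
  have hcf : ∀ (R : (cField p K)[X]), R.coeffs ⊆ P.coeffs ∪ Q.coeffs →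
      ∀ j, (R.coeff j : Kv) ∈ (frobFix p M : Subfield Kv) := by
    intro R hR j
    by_cases h0 : R.coeff j = 0
    · rw [h0]; exact zero_mem _
    · exact hMc _ (hR (coeff_mem_coeffs h0))
  let d := max P.natDegree Q.natDegree
  have hPT : P ∈ polySet p K d M :=
    ⟨le_max_left _ _, hcf P Finset.subset_union_left⟩
  have hQT : Q ∈ polySet p K d M :=
    ⟨le_max_right _ _, hcf Q Finset.subset_union_right⟩
  have key : ∀ n (c : ℕ → Kv) R, Good p K π Q c R →
      c n = (((stepΦ p K Q)^[n] R).coeff 0 / Q.coeff 0 : cField p K) := by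
    intro n
    induction n with
    | zero => intro c R h; exact (Good_step p K π hπ0 hπ Q R c hQ h).1
    | succ n ih =>
      intro c R h
      exact ih _ _ (Good_step p K π hπ0 hπ Q R c hQ h).2
  have hshift : ∀ N, Good p K π Q (fun n => c (n + N)) ((stepΦ p K Q)^[N] P) := by
    intro N
    induction N with
    | zero => exact ⟨hc, x, hx, hPQ⟩
    | succ N ih =>
      rw [Function.iterate_succ_apply']
      have := (Good_step p K π hπ0 hπ Q _ _ hQ ih).2
      convert this using 3
      ring
  have hmem : ∀ N, (stepΦ p K Q)^[N] P ∈ polySet p K d M := by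
    intro N
    induction N with
    | zero => exact hPT
    | succ N ih =>
      rw [Function.iterate_succ_apply']
      exact stepΦ_mem p K d M Q _ hQT ih
  refine ((polySet_finite p K d M hM).image (fun R => fun n : ℕ =>
    ((((stepΦ p K Q)^[n] R).coeff 0 / Q.coeff 0 : cField p K) : Kv))).subset ?_
  rintro _ ⟨N, rfl⟩
  refine ⟨_, hmem N, ?_⟩
  funext n
  exact (key n _ _ (hshift N)).symm

theorem decompose [CompleteSpace Kv] (hπ0 : π ≠ 0) (hπ : Valued.v π < 1)
    (s : ℕ) (α : Fin s → Kv) (c : ℕ → Fin s → Kv) (hc : ∀ n i, c n i ∈ ConstantField p K) :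
    ∃ z : Fin s → Kv, (∀ i, z i ∈ FqPiCompletion p K π) ∧
      (∀ i, HasSum (fun n => c n i * π ^ n) (z i)) ∧
      HasSum (fun n => (∑ i, c n i * α i) * π ^ n) (∑ i, z i * α i) := by
  have hs : ∀ i, Summable (fun n => c n i * π ^ n) := fun i =>
    summable_of_le π hπ0 hπ _ (fun n => v_const_le p K _ (hc n i))
  refine ⟨fun i => ∑' n, c n i * π ^ n, ?_, fun i => (hs i).hasSum, ?_⟩
  · intro i
    have hcl := Subfield.isClosed_topologicalClosure (FqPi p K π)
    refine hcl.mem_of_tendsto (hs i).hasSum (Filter.Eventually.of_forall fun t => ?_)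
    apply Subfield.le_topologicalClosure
    refine sum_mem fun n _ => mul_mem (Subfield.subset_closure (Or.inl (hc n i))) ?_
    exact pow_mem (show π ∈ FqPi p K π from Subfield.subset_closure (Or.inr rfl)) _
  · have := hasSum_sum (s := Finset.univ) (fun i _ => (hs i).hasSum.mul_right (α i))
    refine hasSum_of_eq this fun n => ?_
    rw [Finset.sum_mul]
    exact Finset.sum_congr rfl fun i _ => by ring

theorem span_int [CompleteSpace Kv] (hπ0 : π ≠ 0) (hπ : Valued.v π < 1)
    (s : ℕ) (α : Fin s → Kv) (hα : ∀ i, Valued.v (α i) ≤ 1)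
    (hrep : ∀ x : Kv, Valued.v x ≤ 1 →
      ∃ c : Fin s → Kv, (∀ i, c i ∈ ConstantField p K) ∧
        Valued.v (x - ∑ i, c i * α i) ≤ Valued.v π)
    (y : Kv) (hy : Valued.v y ≤ 1) :
    ∃ z : Fin s → Kv, (∀ i, z i ∈ FqPiCompletion p K π) ∧ y = ∑ i, z i * α i := by
  choose! C hC hC' using hrep
  have hpos : (0 : ZM0) < Valued.v π := zero_lt_iff.2 ((Valuation.ne_zero_iff _).2 hπ0)
  let r : ℕ → Kv := fun n => Nat.rec y (fun _ w => (w - ∑ i, C w i * α i) / π) n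
  have hr1 : ∀ n, Valued.v (r n) ≤ 1 := by
    intro n
    induction n with
    | zero => exact hy
    | succ n ih =>
      change Valued.v ((r n - ∑ i, C (r n) i * α i) / π) ≤ 1
      rw [map_div₀]
      exact div_le_one_of_le₀ (hC' _ ih) zero_le
  have hr2 : ∀ n, r n = ∑ i, C (r n) i * α i + r (n + 1) * π := by
    intro n
    change r n = ∑ i, C (r n) i * α i + ((r n - ∑ i, C (r n) i * α i) / π) * π
    field_simp
    ring
  obtain ⟨z, hzF, -, hz⟩ := decompose p K π hπ0 hπ s α (fun n => C (r n)) (fun n => hC _ (hr1 n))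
  refine ⟨z, hzF, ?_⟩
  have hpart : ∀ N, ∑ n ∈ Finset.range N, (∑ i, C (r n) i * α i) * π ^ n = y - r N * π ^ N := by
    intro N
    induction N with
    | zero => simp [r]
    | succ N ih =>
      rw [Finset.sum_range_succ, ih]
      have := hr2 N
      linear_combination -(π ^ N) * this
  have ht := hz.tendsto_sum_nat
  simp_rw [hpart] at ht
  have h0 : Tendsto (fun N => r N * π ^ N) atTop (𝓝 0) := by
    apply tendsto_of_le_pow π hπ
    intro n
    rw [map_mul]
    exact mul_le_of_le_one_left' (hr1 n)
  have h1 := (tendsto_const_nhds (x := y)).sub h0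
  rw [sub_zero] at h1
  exact tendsto_nhds_unique h1 ht

theorem span_all [CompleteSpace Kv] (hπ0 : π ≠ 0) (hπ : Valued.v π < 1)
    (s : ℕ) (α : Fin s → Kv) (hα : ∀ i, Valued.v (α i) ≤ 1)
    (hrep : ∀ x : Kv, Valued.v x ≤ 1 →
      ∃ c : Fin s → Kv, (∀ i, c i ∈ ConstantField p K) ∧
        Valued.v (x - ∑ i, c i * α i) ≤ Valued.v π)
    (y : Kv) :
    ∃ z : Fin s → Kv, (∀ i, z i ∈ FqPiCompletion p K π) ∧ y = ∑ i, z i * α i := by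
  have h0 : Tendsto (fun N : ℕ => y * π ^ N) atTop (𝓝 (y * 0)) :=
    (Valued.tendsto_zero_pow_of_v_lt_one hπ).const_mul y
  rw [mul_zero] at h0
  obtain ⟨N, hN⟩ := (h0.eventually (ball_mem (0 : Kv) 1 one_ne_zero)).exists
  have hN' : Valued.v (y * π ^ N) ≤ 1 := by simpa using hN
  obtain ⟨z, hz, h⟩ := span_int p K π hπ0 hπ s α hα hrep _ hN'
  have hπF : π ∈ FqPiCompletion p K π :=
    Subfield.le_topologicalClosure _ (Subfield.subset_closure (Or.inr rfl))
  refine ⟨fun i => z i / π ^ N, fun i => div_mem (hz i) (pow_mem hπF _), ?_⟩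
  have : ∑ i, z i / π ^ N * α i = (∑ i, z i * α i) / π ^ N := by
    rw [Finset.sum_div]; exact Finset.sum_congr rfl fun l _ => by ring
  rw [this, ← h]
  field_simp

theorem K_span [CompleteSpace Kv] (hπ0 : π ≠ 0) (hπ : Valued.v π < 1)
    (hdeg : degOver (FqPi p K π) (K : Set Kv) = Module.rank ↥(FqPiCompletion p K π) Kv)
    (s : ℕ) (α : Fin s → Kv) (hα : ∀ i, α i ∈ K ∧ Valued.v (α i) ≤ 1)
    (hindep : ∀ c : Fin s → Kv, (∀ i, c i ∈ ConstantField p K) →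
      Valued.v (∑ i, c i * α i) ≤ Valued.v π → ∀ i, c i = 0)
    (hrep : ∀ x : Kv, Valued.v x ≤ 1 →
      ∃ c : Fin s → Kv, (∀ i, c i ∈ ConstantField p K) ∧
        Valued.v (x - ∑ i, c i * α i) ≤ Valued.v π)
    (x : Kv) (hx : x ∈ K) :
    ∃ z : Fin s → Kv, (∀ i, z i ∈ FqPi p K π) ∧ x = ∑ i, z i * α i := by
  have hα2 := fun i => (hα i).2
  have hle := Subfield.le_topologicalClosure (FqPi p K π)
  have li1 : LinearIndependent (FqPiCompletion p K π) α := by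
    rw [Fintype.linearIndependent_iff]
    intro g hg i
    have := indep_Fhat p K π hπ0 hπ s α hα2 hindep (fun i => (g i : Kv)) (fun i => (g i).2) hg i
    exact_mod_cast this
  have li2 : LinearIndependent (FqPi p K π) α := by
    rw [Fintype.linearIndependent_iff]
    intro g hg i
    have := indep_Fhat p K π hπ0 hπ s α hα2 hindep (fun i => (g i : Kv))
      (fun i => hle (g i).2) hg i
    exact_mod_cast this
  have sp : ⊤ ≤ Submodule.span (FqPiCompletion p K π) (Set.range α) := by
    intro y _
    obtain ⟨z, hz, h⟩ := span_all p K π hπ0 hπ s α hα2 hrep y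
    rw [Submodule.mem_span_range_iff_exists_fun]
    exact ⟨fun i => ⟨z i, hz i⟩, h.symm⟩
  have hrank := rank_eq_card_basis (Module.Basis.mk li1 sp)
  rw [← hdeg, Fintype.card_fin] at hrank
  unfold degOver at hrank
  let V := Submodule.span (FqPi p K π) (K : Set Kv)
  let b : Fin s → V := fun i => ⟨α i, Submodule.subset_span (hα i).1⟩
  have lib : LinearIndependent (FqPi p K π) b := by
    apply LinearIndependent.of_comp V.subtype
    exact li2
  have hfd : FiniteDimensional (FqPi p K π) V := by
    apply Module.rank_lt_aleph0_iff.1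
    rw [hrank]
    exact Cardinal.natCast_lt_aleph0
  have hfr : Module.finrank (FqPi p K π) V = s := Module.finrank_eq_of_rank_eq hrank
  have htop := lib.span_eq_top_of_card_eq_finrank' (by rw [hfr, Fintype.card_fin])
  have hxV : (⟨x, Submodule.subset_span hx⟩ : V) ∈ Submodule.span (FqPi p K π) (Set.range b) := by
    rw [htop]; trivial
  obtain ⟨g, hg⟩ := (Submodule.mem_span_range_iff_exists_fun _).1 hxV
  refine ⟨fun i => g i, fun i => (g i).2, ?_⟩
  have := congrArg Subtype.val hg
  simp only [AddSubmonoidClass.coe_finsetSum, Submodule.coe_smul, b] at this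
  exact this.symm

theorem rational_of_periodic (hπ0 : π ≠ 0) (hπ : Valued.v π < 1) (hπK : π ∈ K) (c : ℕ → Kv)
    (hc : ∀ n, c n ∈ K) (x : Kv) (hx : HasSum (fun n => c n * π ^ n) x) (N L : ℕ) (hL : 0 < L)
    (hper : ∀ n, N ≤ n → c (n + L) = c n) : x ∈ K := by
  have hfin : ∀ k, ∑ i ∈ Finset.range k, c i * π ^ i ∈ K := fun k =>
    sum_mem fun i _ => mul_mem (hc i) (pow_mem hπK i)
  have h1 := (hasSum_nat_add_iff' N).2 hx
  have h2 := (hasSum_nat_add_iff' (N + L)).2 hx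
  have h3 := h1.mul_right (π ^ L)
  have h4 : (fun n => c (n + N) * π ^ (n + N) * π ^ L) =
      fun n => c (n + (N + L)) * π ^ (n + (N + L)) := by
    funext n
    rw [← add_assoc, hper (n + N) (Nat.le_add_left _ _), mul_assoc, ← pow_add]
  rw [h4] at h3
  have h5 := h3.unique h2
  have hlt : Valued.v (π ^ L) < 1 := by
    rw [map_pow]; exact pow_lt_one₀ zero_le hπ hL.ne'
  have hne : 1 - π ^ L ≠ 0 := by
    intro h
    rw [← sub_eq_zero.1 h, map_one] at hlt
    exact lt_irrefl _ hlt
  have hx' : x = (∑ i ∈ Finset.range (N + L), c i * π ^ i -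
      (∑ i ∈ Finset.range N, c i * π ^ i) * π ^ L) / (1 - π ^ L) := by
    rw [eq_div_iff hne]
    linear_combination -h5
  rw [hx']
  exact div_mem (sub_mem (hfin _) (mul_mem (hfin _) (pow_mem hπK _)))
    (sub_mem (one_mem _) (pow_mem hπK _))

theorem periodic_of_rational [CompleteSpace Kv] (hπ0 : π ≠ 0) (hπ : Valued.v π < 1)
    (hdeg : degOver (FqPi p K π) (K : Set Kv) = Module.rank ↥(FqPiCompletion p K π) Kv)
    (s : ℕ) (α : Fin s → Kv) (hα : ∀ i, α i ∈ K ∧ Valued.v (α i) ≤ 1)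
    (hindep : ∀ c : Fin s → Kv, (∀ i, c i ∈ ConstantField p K) →
      Valued.v (∑ i, c i * α i) ≤ Valued.v π → ∀ i, c i = 0)
    (hrep : ∀ x : Kv, Valued.v x ≤ 1 →
      ∃ c : Fin s → Kv, (∀ i, c i ∈ ConstantField p K) ∧
        Valued.v (x - ∑ i, c i * α i) ≤ Valued.v π)
    (x : Kv) (hx : x ∈ K) (c : ℕ → Fin s → Kv) (hc : ∀ n i, c n i ∈ ConstantField p K)
    (hs : HasSum (fun n => (∑ i, c n i * α i) * π ^ n) x) :
    ∃ N L : ℕ, 0 < L ∧ ∀ n, N ≤ n → c (n + L) = c n := by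
  obtain ⟨z, hzF, hz, hzs⟩ := decompose p K π hπ0 hπ s α c hc
  have hxz := hs.unique hzs
  obtain ⟨w, hw, hxw⟩ := K_span p K π hπ0 hπ hdeg s α hα hindep hrep x hx
  have hle := Subfield.le_topologicalClosure (FqPi p K π)
  have hzw : ∀ i, z i - w i = 0 := by
    apply indep_Fhat p K π hπ0 hπ s α (fun i => (hα i).2) hindep
    · exact fun i => sub_mem (hzF i) (hle (hw i))
    · simp only [sub_mul, Finset.sum_sub_distrib, ← hxz, ← hxw, sub_self]
  have hzF' : ∀ i, z i ∈ FqPi p K π := fun i => by rw [sub_eq_zero.1 (hzw i)]; exact hw i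
  have hf := fun i => finite_shifts p K π hπ0 hπ (fun n => c n i) (fun n => hc n i) (z i)
    (hz i) (hzF' i)
  have hpi := Set.Finite.pi' hf
  have hninj : ¬ Function.Injective (fun N : ℕ => fun i : Fin s => fun n : ℕ => c (n + N) i) := by
    intro hinj
    refine Set.infinite_range_of_injective hinj (hpi.subset ?_)
    rintro _ ⟨N, rfl⟩ i
    exact ⟨N, rfl⟩
  rw [Function.not_injective_iff] at hninj
  obtain ⟨a, b, hab, hne⟩ := hninj
  wlog hlt : a < b generalizing a b
  · exact this b a hab.symm hne.symm (by omega)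
  refine ⟨a, b - a, by omega, fun n hn => ?_⟩
  funext i
  have := congrFun (congrFun hab i) (n - a)
  rw [show n - a + a = n by omega, show n - a + b = n + (b - a) by omega] at this
  exact this.symm

end helpers

/-- **Lemma 2.2.** Suppose `π ∈ A` and `[K : 𝔽_q(π)] = [K_v : 𝔽_q((π))]`.
If `α₁, …, α_{ef} ∈ A` have reductions modulo `πA` forming an `𝔽_q`-basis of
`A/πA` (`𝔽_q`-linearly independent, with `ef = dim A/πA` of them), then
`Γ = 𝔽_q α₁ + ⋯ + 𝔽_q α_{ef}` is a complete set of representatives of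
`A_v/πA_v` and `(Γ, π)` has property A. -/
theorem propertyA_of_linear_digits
    {Kv : Type*} [Field Kv] [Valued Kv ZM0]
    (p : ℕ) [Fact p.Prime] (K : Subfield Kv)
    (hK : IsGlobalFunctionFieldCompletion p K)
    (π : Kv) (hπ0 : π ≠ 0) (hπ : Valued.v π < 1) (hπK : π ∈ K)
    (hdeg : degOver (FqPi p K π) (K : Set Kv) = Module.rank ↥(FqPiCompletion p K π) Kv)
    (s : ℕ) (α : Fin s → Kv)
    (hα : ∀ i, α i ∈ K ∧ Valued.v (α i) ≤ 1)
    (hindep : ∀ c : Fin s → Kv, (∀ i, c i ∈ ConstantField p K) →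
      Valued.v (∑ i, c i * α i) ≤ Valued.v π → ∀ i, c i = 0)
    (hgen : ∀ x : Kv, x ∈ K → Valued.v x ≤ 1 →
      ∃ c : Fin s → Kv, (∀ i, c i ∈ ConstantField p K) ∧
        Valued.v (x - ∑ i, c i * α i) ≤ Valued.v π) :
    IsCompleteSetOfReps π
        {y : Kv | ∃ c : Fin s → Kv, (∀ i, c i ∈ ConstantField p K) ∧ y = ∑ i, c i * α i} ∧
      HasPropertyA K π
        {y : Kv | ∃ c : Fin s → Kv, (∀ i, c i ∈ ConstantField p K) ∧ y = ∑ i, c i * α i} := by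
  have := hK.charP
  have := hK.complete
  have hα2 := fun i => (hα i).2
  have hrep : ∀ x : Kv, Valued.v x ≤ 1 →
      ∃ c : Fin s → Kv, (∀ i, c i ∈ ConstantField p K) ∧
        Valued.v (x - ∑ i, c i * α i) ≤ Valued.v π := by
    intro x hx
    obtain ⟨y, hy, hyK⟩ := mem_closure_iff_nhds.1 (hK.dense x) _ (ball_mem x π hπ0)
    have hy' : Valued.v (y - x) ≤ Valued.v π := hy
    have hy1 : Valued.v y ≤ 1 := by
      have : y = (y - x) + x := by ring
      rw [this]
      exact Valuation.map_add_le _ (hy'.trans hπ.le) hx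
    obtain ⟨c, hc, h⟩ := hgen y hyK hy1
    refine ⟨c, hc, ?_⟩
    have : x - ∑ i, c i * α i = (y - ∑ i, c i * α i) - (y - x) := by ring
    rw [this]
    exact Valuation.map_sub_le _ h hy'
  refine ⟨⟨?_, ?_⟩, ?_⟩
  · rintro _ ⟨c, hc, rfl⟩
    apply Valuation.map_sum_le
    intro i _
    rw [map_mul]
    exact mul_le_one' (v_const_le p K _ (hc i)) (hα2 i)
  · intro x hx
    obtain ⟨c, hc, h⟩ := hrep x hx
    refine ⟨_, ⟨⟨c, hc, rfl⟩, h⟩, ?_⟩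
    rintro _ ⟨⟨d, hd, rfl⟩, h'⟩
    have e : ∑ i, (d i - c i) * α i = (x - ∑ i, c i * α i) - (x - ∑ i, d i * α i) := by
      simp only [sub_mul, Finset.sum_sub_distrib]; ring
    have := hindep (fun i => d i - c i) (fun i => (cField p K).sub_mem (hd i) (hc i)) (by
      rw [e]; exact Valuation.map_sub_le _ h h')
    exact Finset.sum_congr rfl fun i _ => by rw [sub_eq_zero.1 (this i)]
  · intro x m a ⟨ha, hsum⟩
    have ha' : ∀ n : ℕ, ∃ c : Fin s → Kv, (∀ i, c i ∈ ConstantField p K) ∧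
        a (m + n) = ∑ i, c i * α i := fun n => ha (m + n) (by omega)
    choose c hc hca using ha'
    have hpm : π ^ m ∈ K := zpow_mem hπK m
    have hpm0 : π ^ m ≠ 0 := zpow_ne_zero _ hπ0
    have hs2 : HasSum (fun n : ℕ => a (m + n) * π ^ n) (x / π ^ m) := by
      have := hsum.mul_right (π ^ m)⁻¹
      rw [← div_eq_mul_inv] at this
      refine hasSum_of_eq this fun n => ?_
      rw [zpow_add₀ hπ0, zpow_natCast]
      field_simp
    constructor
    · intro hx
      have hs3 := hs2
      simp_rw [hca] at hs3
      obtain ⟨N, L, hL, h⟩ := periodic_of_rational p K π hπ0 hπ hdeg s α hα hindep hrep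
        (x / π ^ m) (div_mem hx hpm) c hc hs3
      refine ⟨m + N, L, by omega, by omega, ?_⟩
      intro n hn
      obtain ⟨k, rfl⟩ : ∃ k : ℕ, n = m + k := ⟨(n - m).toNat, by omega⟩
      have e : m + (k : ℤ) + L = m + ((k + L : ℕ) : ℤ) := by push_cast; ring
      rw [e, hca, hca, h k (by omega)]
    · rintro ⟨N, L, hN, hL, h⟩
      have hxm : x / π ^ m ∈ K := by
        refine rational_of_periodic K π hπ0 hπ hπK (fun n => a (m + n)) ?_ _ hs2
          (N - m).toNat L.toNat (by omega) ?_
        · intro n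
          simp only [hca]
          exact sum_mem fun i _ => mul_mem (hc n i).1 (hα i).1
        · intro n hn
          have := h (m + n) (by omega)
          rw [← this]
          congr 1
          push_cast
          omega
      have : x = x / π ^ m * π ^ m := by field_simp
      rw [this]
      exact mul_mem hxm hpm
end
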